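/- For every N ≥ 2 there exists a first order differential calculus (Γ,d) on CP_q^{N−1} with the following two properties. (a) The left-module map π : F → Γ with π(e_ij) = d x_ij is surjective, and its kernel is the left submodule of F generated by the element ω̂ together with the N² elements ρ'_ij := e_ij − q² Σ_s q^{−2s} x_is e_sj − q⁻¹ Σ_{a,b,c,s,t,u,v} Rlm^{tu}_{bc} R⁻^{sb}_{ia} Rc^{cv}_{aj} x_st e_uv; in particular ⍵ = 0 in Γ. (b) For all i,j,k,l: d x_ij·x_kl = q^{−2} Σ_{a,b,c,s,t,u,v,w,x,y,z} RCPm^{xyzw}_{ijkl} Rlm^{tu}_{bc} R⁻^{sb}_{za} Rc^{cv}_{aw} x_xy x_st d x_uv + q³ Σ_{s,t,u,v,w} q^{−2w} RCPc^{stuv}_{ijkl} x_st x_uw d x_wv. -/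

import Mathlib

open scoped BigOperators

noncomputable section

/-- index value in `{1,…,N}` of `i : Fin N` -/
def iv {N : ℕ} (i : Fin N) : ℤ := (i : ℕ) + 1

/-- `pw q m = q ^ m` as a complex number -/
def pw (q : ℝ) (m : ℤ) : ℂ := (q : ℂ) ^ m

/-- Kronecker delta -/
def kd {N : ℕ} (i j : Fin N) : ℂ := if i = j then 1 else 0

/-- the R-matrix of `SU_q(N)`: entry `R^{ij}_{kl}` -/
def Rmat (q : ℝ) {N : ℕ} (i j k l : Fin N) : ℂ :=
  if i = l ∧ k = j ∧ i ≠ k then 1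
  else if i = j ∧ j = k ∧ k = l then (q : ℂ)
  else if i = k ∧ j = l ∧ i < j then (q : ℂ) - (q : ℂ)⁻¹
  else 0

/-- `R⁻ = R - (q - q⁻¹) I` -/
def Rminus (q : ℝ) {N : ℕ} (i j k l : Fin N) : ℂ :=
  Rmat q i j k l - ((q : ℂ) - (q : ℂ)⁻¹) * (if i = k ∧ j = l then 1 else 0)

def Rc (q : ℝ) {N : ℕ} (i j k l : Fin N) : ℂ := Rmat q l k j i
def Rl (q : ℝ) {N : ℕ} (i j k l : Fin N) : ℂ := pw q (2 * iv l - 2 * iv i) * Rmat q j l i k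
def Rr (q : ℝ) {N : ℕ} (i j k l : Fin N) : ℂ := Rmat q k i l j
def Rcm (q : ℝ) {N : ℕ} (i j k l : Fin N) : ℂ := Rminus q l k j i
def Rlm (q : ℝ) {N : ℕ} (i j k l : Fin N) : ℂ := pw q (2 * iv l - 2 * iv i) * Rminus q j l i k
def Rrm (q : ℝ) {N : ℕ} (i j k l : Fin N) : ℂ := Rminus q k i l j

/-- `RCP^{stuv}_{ijkl} = Σ_{a,b,c} Rlm^{tu}_{ab} R^{sa}_{ic} Rr^{cb}_{jk} δ_{vl}` -/
def RCP (q : ℝ) {N : ℕ} (s t u v i j k l : Fin N) : ℂ :=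
  (if v = l then (1 : ℂ) else 0) *
    ∑ a : Fin N, ∑ b : Fin N, ∑ c : Fin N, Rlm q t u a b * Rmat q s a i c * Rr q c b j k

/-- `RCPm^{stuv}_{ijkl} = Σ_{a,b,c} Rlm^{tu}_{ab} R⁻^{sa}_{ic} Rr^{cb}_{jk} δ_{vl}` -/
def RCPm (q : ℝ) {N : ℕ} (s t u v i j k l : Fin N) : ℂ :=
  (if v = l then (1 : ℂ) else 0) *
    ∑ a : Fin N, ∑ b : Fin N, ∑ c : Fin N, Rlm q t u a b * Rminus q s a i c * Rr q c b j k

/-- `RCPc^{stuv}_{ijkl} = Σ_{a,b,c} Rlm^{tu}_{ab} Rc^{bv}_{cl} Rr^{ac}_{jk} δ_{si}` -/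
def RCPc (q : ℝ) {N : ℕ} (s t u v i j k l : Fin N) : ℂ :=
  (if s = i then (1 : ℂ) else 0) *
    ∑ a : Fin N, ∑ b : Fin N, ∑ c : Fin N, Rlm q t u a b * Rc q b v c l * Rr q a c j k

/-- `RCPcm^{stuv}_{ijkl} = Σ_{a,b,c} Rlm^{tu}_{ab} Rcm^{bv}_{cl} Rr^{ac}_{jk} δ_{si}` -/
def RCPcm (q : ℝ) {N : ℕ} (s t u v i j k l : Fin N) : ℂ :=
  (if s = i then (1 : ℂ) else 0) *
    ∑ a : Fin N, ∑ b : Fin N, ∑ c : Fin N, Rlm q t u a b * Rcm q b v c l * Rr q a c j k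

/-- `s+ = Σ_{i=0}^{N-1} q^{2i}` -/
def sP (q : ℝ) (N : ℕ) : ℂ := ∑ i ∈ Finset.range N, (q : ℂ) ^ (2 * i)
/-- `s'+ = s+ - 1` -/
def s1P (q : ℝ) (N : ℕ) : ℂ := sP q N - 1
/-- `s''+ = s'+ - q²` -/
def s2P (q : ℝ) (N : ℕ) : ℂ := s1P q N - (q : ℂ) ^ 2
/-- `s''''+ = s''+ - q⁴ - q⁶` -/
def s4P (q : ℝ) (N : ℕ) : ℂ := s2P q N - (q : ℂ) ^ 4 - (q : ℂ) ^ 6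

/-- the free algebra on the `N²` generators `x_ij` -/
abbrev FA (N : ℕ) := FreeAlgebra ℂ (Fin N × Fin N)

/-- the generator `x_ij` of the free algebra -/
def gen {N : ℕ} (i j : Fin N) : FA N := FreeAlgebra.ι ℂ (i, j)

/-- the defining relations of quantum projective space -/
inductive CPrel (q : ℝ) (N : ℕ) : FA N → FA N → Prop
  | relm (i j k l : Fin N) :
      CPrel q N
        (∑ s : Fin N, ∑ t : Fin N, ∑ u : Fin N, ∑ v : Fin N,
          RCPm q s t u v i j k l • (gen s t * gen u v))
        ((q : ℂ)⁻¹ • (gen i j * gen k l))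
  | relc (i j k l : Fin N) :
      CPrel q N
        (∑ s : Fin N, ∑ t : Fin N, ∑ u : Fin N, ∑ v : Fin N,
          RCPc q s t u v i j k l • (gen s t * gen u v))
        ((q : ℂ) • (gen i j * gen k l))
  | relu : CPrel q N (∑ i : Fin N, gen i i) 1

/-- quantum projective space `CP_q^{N-1}`: the quotient of the free algebra by the
two-sided ideal generated by the defining relations -/
abbrev CPq (q : ℝ) (N : ℕ) := RingQuot (CPrel q N)

/-- the generator `x_ij` of `CP_q^{N-1}` -/
def X (q : ℝ) {N : ℕ} (i j : Fin N) : CPq q N :=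
  RingQuot.mkAlgHom ℂ (CPrel q N) (gen i j)

/-- a first order differential calculus on a unital ℂ-algebra `A`:
a bimodule `Γ`, a ℂ-linear `d` satisfying the Leibniz rule, with `Γ = Lin{a·db}` -/
structure FODC (A : Type) [Ring A] [Algebra ℂ A] where
  Γ : Type
  [grp : AddCommGroup Γ]
  [modC : Module ℂ Γ]
  [modL : Module A Γ]
  [modR : Module Aᵐᵒᵖ Γ]
  [smulComm : SMulCommClass A Aᵐᵒᵖ Γ]
  [towerL : IsScalarTower ℂ A Γ]
  [towerR : IsScalarTower ℂ Aᵐᵒᵖ Γ]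
  d : A → Γ
  d_add : ∀ a b : A, d (a + b) = d a + d b
  d_smul : ∀ (c : ℂ) (a : A), d (c • a) = c • d a
  leibniz : ∀ a b : A, d (a * b) = MulOpposite.op b • d a + a • d b
  spanning : Submodule.span ℂ {z : Γ | ∃ a b : A, z = a • d b} = ⊤

attribute [instance] FODC.grp FODC.modC FODC.modL FODC.modR FODC.smulComm
attribute [instance] FODC.towerL FODC.towerR

/-- the invariant one-form `⍵ = Σ_{i,j} q^{-2j} x_ij · d x_ji` -/
def om (q : ℝ) {N : ℕ} (D : FODC (CPq q N)) : D.Γ :=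
  ∑ i : Fin N, ∑ j : Fin N, pw q (-2 * iv j) • (X q i j • D.d (X q j i))

/-- the free left `CP_q^{N-1}`-module on `N²` symbols `e_ij` -/
abbrev FMod (q : ℝ) (N : ℕ) := Fin N × Fin N → CPq q N

/-- the standard generator `e_ij` of the free module -/
def e (q : ℝ) {N : ℕ} (i j : Fin N) : FMod q N := Pi.single (i, j) 1

/-- `ω̂ = Σ_{k,l} q^{-2l} x_kl e_lk` in the free module -/
def omHat (q : ℝ) (N : ℕ) : FMod q N :=
  ∑ k : Fin N, ∑ l : Fin N, pw q (-2 * iv l) • (X q k l • e q l k)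

/-- the left-module map `π : F → Γ` with `π(e_ij) = d x_ij` -/
def piMap (q : ℝ) {N : ℕ} (D : FODC (CPq q N)) : FMod q N → D.Γ :=
  fun f => ∑ p : Fin N × Fin N, f p • D.d (X q p.1 p.2)

/-- `ρ_ij = e_ij - A Σ_s q^{-2s} x_is e_sj - B Σ Rlm^{tu}_{bc} R⁻^{sb}_{ia} Rc^{cv}_{aj} x_st e_uv
  - C x_ij ω̂ - E q^{2j} δ_ij ω̂` -/
def rho (q : ℝ) {N : ℕ} (A B C E : ℂ) (i j : Fin N) : FMod q N :=
  e q i j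
    - A • (∑ s : Fin N, pw q (-2 * iv s) • (X q i s • e q s j))
    - B • (∑ a : Fin N, ∑ b : Fin N, ∑ c : Fin N, ∑ s : Fin N, ∑ t : Fin N, ∑ u : Fin N,
        ∑ v : Fin N, (Rlm q t u b c * Rminus q s b i a * Rc q c v a j) • (X q s t • e q u v))
    - C • (X q i j • omHat q N)
    - (E * pw q (2 * iv j) * kd i j) • omHat q N

/-- `ρ'_ij = e_ij - A Σ_s q^{-2s} x_is e_sj - B Σ Rlm^{tu}_{bc} R⁻^{sb}_{ia} Rc^{cv}_{aj} x_st e_uv` -/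
def rho' (q : ℝ) {N : ℕ} (A B : ℂ) (i j : Fin N) : FMod q N :=
  e q i j
    - A • (∑ s : Fin N, pw q (-2 * iv s) • (X q i s • e q s j))
    - B • (∑ a : Fin N, ∑ b : Fin N, ∑ c : Fin N, ∑ s : Fin N, ∑ t : Fin N, ∑ u : Fin N,
        ∑ v : Fin N, (Rlm q t u b c * Rminus q s b i a * Rc q c v a j) • (X q s t • e q u v))

/-- the one-forms `τ_ij` generating the sub-bimodule which is factored out
to pass from the calculus of Thm 2(1) to the restricted calculus -/
def tau (q : ℝ) {N : ℕ} (D : FODC (CPq q N)) (i j : Fin N) : D.Γ :=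
  D.d (X q i j)
    - (q : ℂ) ^ 2 • (∑ s : Fin N, pw q (-2 * iv s) • (X q i s • D.d (X q s j)))
    - (q : ℂ)⁻¹ • (∑ a : Fin N, ∑ b : Fin N, ∑ c : Fin N, ∑ s : Fin N, ∑ t : Fin N, ∑ u : Fin N,
        ∑ v : Fin N, (Rlm q t u b c * Rminus q s b i a * Rc q c v a j) • (X q s t • D.d (X q u v)))
    + (s2P q N / s1P q N) • (X q i j • om q D)
    + ((1 / s1P q N) * pw q (2 * iv j) * kd i j) • om q D

/-- the index set `{(i,j) : (i,j) ≠ (N,N)}` -/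
abbrev FreeIdx (N : ℕ) := {p : Fin N × Fin N // ¬((p.1 : ℕ) = N - 1 ∧ (p.2 : ℕ) = N - 1)}

/-- `{d x_ij : (i,j) ≠ (N,N)}` is a basis of `Γ` as a left `CP_q^{N-1}`-module -/
def HasFreeBasis (q : ℝ) {N : ℕ} (D : FODC (CPq q N)) : Prop :=
  LinearIndependent (CPq q N) (fun p : FreeIdx N => D.d (X q p.1.1 p.1.2)) ∧
    Submodule.span (CPq q N) (Set.range fun p : FreeIdx N => D.d (X q p.1.1 p.1.2)) = ⊤

/-!
Write `x` for the matrix of generators, a tensor with one leg `W = V ⊗ V*`. It is a projector, so a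
differential satisfies `dx = x·dx + dx·x`, and right multiplication by the generators is determined
once it is expressed through left multiplication on each of the two summands. There `dx_a·x_b` is a
multiple of a braiding of `W ⊗ W` applied to `x_a·dx_b`: the braiding `Q` of the factors `V*` for
`x·dx`, the braiding `P` of the factors `V` for `dx·x`. Compatibility with the relations among forms
and among generators follows from the braid and Hecke relations for `P` and `Q` and one identity for
the evaluation `W → k`.

The right action comes from the universal property of the algebra, applied to a projector over the
opposite of the endomorphism algebra of the left module of forms. The differential comes from the
same universal property, applied to the projector `x + dx` over the trivial square-zero extension.

For `CP_q^{N-1}` the operator identities are checked after rearranging several legs `V ⊗ V*` so that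
all factors `V` precede all factors `V*`. Then `P` and `Q` act on neighbouring factors, and the
identities reduce to the Yang–Baxter and Hecke relations of the R-matrix.
-/

universe u v

section Legs

variable {k : Type u} [CommRing k] {κ : Type v}
variable {M M' : Type*} [AddCommGroup M] [Module k M] [AddCommGroup M'] [Module k M']

/-- A linear map applied behind the first leg. A tensor with coefficients in `M` and legs indexed
by `κ` is a function `κ → ⋯ → κ → M`, its first leg being the outermost argument. -/
def shift (T : M →ₗ[k] M') : (κ → M) →ₗ[k] (κ → M') := T.compLeft κ

@[simp] theorem shift_apply (T : M →ₗ[k] M') (f : κ → M) (a : κ) : shift T f a = T (f a) := rfl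

section LeftMul

variable {A : Type*} [Ring A] [Algebra k A] [Module A M] [IsScalarTower k A M]
  [Module A M'] [IsScalarTower k A M']

variable (k) in
/-- Left multiplication by the entries of `x`, which become a new first leg. -/
def leftMul (x : κ → A) : M →ₗ[k] (κ → M) := LinearMap.pi fun a => Algebra.lsmul k k M (x a)

@[simp] theorem leftMul_apply (x : κ → A) (f : M) (a : κ) :
    leftMul k x f a = x a • f := rfl

theorem leftMul_comm (x : κ → A) {T : M →ₗ[k] M'} (hT : ∀ (a : A) f, T (a • f) = a • T f)
    (f : M) : leftMul k x (T f) = shift T (leftMul k x f) :=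
  funext fun a => (hT (x a) f).symm

theorem leftMul_shift (x : κ → A) {κ' : Type*} (h : M →ₗ[A] M') (f : κ' → M) :
    leftMul k x (shift (h.restrictScalars k) f) =
      shift (shift (h.restrictScalars k)) (leftMul k x f) :=
  leftMul_comm x (fun a f => funext fun b => h.map_smul a (f b)) f

end LeftMul

variable [Fintype κ]

/-- The operator with matrix `m` on the first two legs; the first two indices of `m` are summed. -/
def act (m : κ → κ → κ → κ → k) : (κ → κ → M) →ₗ[k] (κ → κ → M) where
  toFun f c d := ∑ a, ∑ b, m a b c d • f a b
  map_add' f g := by ext; simp [Finset.sum_add_distrib]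
  map_smul' r f := by ext; simp [Finset.smul_sum, smul_comm r]

/-- The contraction of the first leg against a covector. -/
def contract (w : κ → k) : (κ → M) →ₗ[k] M where
  toFun f := ∑ a, w a • f a
  map_add' f g := by simp [Finset.sum_add_distrib]
  map_smul' r f := by simp [Finset.smul_sum, smul_comm r]

theorem act_apply (m : κ → κ → κ → κ → k) (f : κ → κ → M) (c d : κ) :
    act m f c d = ∑ a, ∑ b, m a b c d • f a b := rfl

theorem contract_apply (w : κ → k) (f : κ → M) : contract w f = ∑ a, w a • f a := rfl

theorem act_shift_shift (m : κ → κ → κ → κ → k) (T : M →ₗ[k] M') (f : κ → κ → M) :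
    act m (shift (shift T) f) = shift (shift T) (act m f) := by
  ext; simp [act_apply]

theorem contract_shift (w : κ → k) (T : M →ₗ[k] M') (f : κ → M) :
    contract w (shift T f) = T (contract w f) := by
  simp [contract_apply]

variable {A : Type*} [Ring A] [Algebra k A] [Module A M] [IsScalarTower k A M]

theorem leftMul_act (x : κ → A) (m : κ → κ → κ → κ → k) (f : κ → κ → M) :
    leftMul k x (act m f) = shift (act m) (leftMul k x f) :=
  leftMul_comm x (fun a f => by ext; simp [act_apply, Finset.smul_sum, smul_comm a]) f

theorem leftMul_contract (x : κ → A) (w : κ → k) (f : κ → M) :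
    leftMul k x (contract w f) = shift (contract w) (leftMul k x f) :=
  leftMul_comm x (fun a f => by simp [contract_apply, Finset.smul_sum, smul_comm a]) f

theorem leftMul_shift_contract (x : κ → A) (w : κ → k) (f : κ → κ → M) :
    leftMul k x (shift (contract w) f) = shift (shift (contract w)) (leftMul k x f) :=
  leftMul_comm x (fun a f => by ext; simp [contract_apply, Finset.smul_sum, smul_comm a]) f

theorem act_leftMul_leftMul {m : κ → κ → κ → κ → k} {x : κ → A}
    (h : (act m fun a b => x a * x b) = fun a b => x a * x b) (f : M) :
    act m (leftMul k x (leftMul k x f)) = leftMul k x (leftMul k x f) := by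
  ext c d
  simpa [act_apply, Finset.sum_smul, mul_smul] using
    congrArg (fun g : κ → κ → A => g c d • f) h

end Legs

/-- The data needed for a differential calculus on the algebra generated by the entries of a
projector. The legs are those of `W = V ⊗ V*`; `P` and `Q` braid the factors `V` and `V*` of two
legs, and `ε` is the evaluation `W → k`. The operator equations are imposed on tensors with
coefficients in an arbitrary module. -/
structure ProjectorSystem (k : Type u) [CommRing k] (κ : Type v) [Fintype κ] where
  P : κ → κ → κ → κ → k
  Q : κ → κ → κ → κ → k
  ε : κ → k
  t : kˣ
  P_braid {M : Type v} [AddCommGroup M] [Module k M] (f : κ → κ → κ → M) :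
    act P (shift (act P) (act P f)) = shift (act P) (act P (shift (act P) f))
  Q_braid {M : Type v} [AddCommGroup M] [Module k M] (f : κ → κ → κ → M) :
    act Q (shift (act Q) (act Q f)) = shift (act Q) (act Q (shift (act Q) f))
  P_Q {M : Type v} [AddCommGroup M] [Module k M] (f : κ → κ → M) :
    act P (act Q f) = act Q (act P f)
  P_shift_Q {M : Type v} [AddCommGroup M] [Module k M] (f : κ → κ → κ → M) :
    act P (shift (act Q) f) = shift (act Q) (act P f)
  shift_P_Q {M : Type v} [AddCommGroup M] [Module k M] (f : κ → κ → κ → M) :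
    shift (act P) (act Q f) = act Q (shift (act P) f)
  P_P {M : Type v} [AddCommGroup M] [Module k M] (f : κ → κ → M) :
    act P (act P f) = (t : k) • f + (1 - (t : k)) • act P f
  Q_Q {M : Type v} [AddCommGroup M] [Module k M] (f : κ → κ → M) :
    act Q (act Q f) = (↑t⁻¹ : k) • f + (1 - (↑t⁻¹ : k)) • act Q f
  contract_P_Q {M : Type v} [AddCommGroup M] [Module k M] (f : κ → κ → M) :
    contract ε (act P (act Q f)) = shift (contract ε) f

namespace ProjectorSystem

variable {k : Type u} [CommRing k] {κ : Type v} [Fintype κ] (S : ProjectorSystem k κ)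

local notation "P₁" => act (P S)
local notation "P₂" => shift (act (P S))
local notation "Q₁" => act (Q S)
local notation "Q₂" => shift (act (Q S))
local notation "ε₁" => contract (ε S)
local notation "ε₂" => shift (contract (ε S))
local notation "ε₃" => shift (shift (contract (ε S)))
local notation "τ" => (Units.val (t S) : k)
local notation "τ⁻" => (Units.val (t S)⁻¹ : k)

section Mul

variable {M : Type v} [AddCommGroup M] [Module k M]

/-- The product `W ⊗ W → W`, which evaluates the inner factors of `V ⊗ V* ⊗ V ⊗ V*` after braiding
them past each other. -/
def mul : (κ → κ → M) →ₗ[k] (κ → M) := ε₁ ∘ₗ P₁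

theorem mul_apply (f : κ → κ → M) : S.mul f = ε₁ (P₁ f) := rfl

theorem shift_mul (f : κ → κ → κ → M) : shift S.mul f = ε₂ (P₂ f) := rfl

theorem mul_Q (f : κ → κ → M) : S.mul (Q₁ f) = ε₂ f := S.contract_P_Q f

theorem Q_surjective (f : κ → κ → M) : ∃ g : κ → κ → M, Q₁ g = f :=
  ⟨τ • Q₁ f + (1 - τ) • f, by
    rw [map_add, map_smul, map_smul, S.Q_Q]
    match_scalars <;> simp [mul_sub]⟩

theorem P_shift_mul (f : κ → κ → κ → M) : P₁ (shift S.mul f) = shift S.mul (P₁ f) := by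
  obtain ⟨g, rfl⟩ : ∃ g : κ → κ → κ → M, Q₂ g = f := by
    choose g hg using fun a => S.Q_surjective (f a)
    exact ⟨g, funext hg⟩
  calc P₁ (shift S.mul (Q₂ g)) = P₁ (ε₃ g) := congrArg _ (funext fun a => S.mul_Q (g a))
    _ = ε₃ (P₁ g) := act_shift_shift _ _ _
    _ = shift S.mul (Q₂ (P₁ g)) := (funext fun a => S.mul_Q (P₁ g a)).symm
    _ = shift S.mul (P₁ (Q₂ g)) := by rw [S.P_shift_Q]

theorem mul_shift_Q (f : κ → κ → κ → M) : S.mul (Q₂ f) = Q₁ (S.mul f) := by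
  rw [mul_apply, S.P_shift_Q, contract_shift, mul_apply]

end Mul

variable {A : Type v} [Ring A] [Algebra k A] {M : Type v} [AddCommGroup M] [Module k M] [Module A M]
  [IsScalarTower k A M]

/-- The family `x` is a projector of trace one whose entries commute up to the braidings. -/
structure IsProjector (x : κ → A) : Prop where
  P_mul : (P₁ fun a b => x a * x b) = fun a b => x a * x b
  Q_mul : (Q₁ fun a b => x a * x b) = fun a b => x a * x b
  contract_eq_one : ε₁ x = 1

variable (x : κ → A)

local notation "𝐱" => leftMul k x

/-- For `e = dx` this is the one-form `x · dx`, the matrix product. -/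
def leftPart : (κ → M) →ₗ[k] (κ → M) := S.mul ∘ₗ 𝐱

/-- For `e = dx` this is the one-form `dx · x`, rewritten with the coefficients on the left. -/
def rightPart : (κ → M) →ₗ[k] (κ → M) := τ⁻ • ε₂ ∘ₗ P₁ ∘ₗ 𝐱

/-- `dx_a · x_b` for the component `x · dx` of `dx`. -/
def leftPartMul : (κ → M) →ₗ[k] (κ → κ → M) := τ • Q₁ ∘ₗ 𝐱 ∘ₗ S.leftPart x

/-- `dx_a · x_b` for the component `dx · x` of `dx`. -/
def rightPartMul : (κ → M) →ₗ[k] (κ → κ → M) := τ⁻ • P₁ ∘ₗ 𝐱 ∘ₗ S.rightPart x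

local notation "E₁" => leftPart S x
local notation "E₂" => rightPart S x
local notation "B₁" => leftPartMul S x
local notation "B₂" => rightPartMul S x

theorem leftPart_apply (e : κ → M) : E₁ e = ε₁ (P₁ (𝐱 e)) := rfl

theorem rightPart_apply (e : κ → M) : E₂ e = τ⁻ • ε₂ (P₁ (𝐱 e)) := rfl

theorem leftPartMul_apply (e : κ → M) : B₁ e = τ • Q₁ (𝐱 (E₁ e)) := rfl

theorem rightPartMul_apply (e : κ → M) : B₂ e = τ⁻ • P₁ (𝐱 (E₂ e)) := rfl

theorem P_add_rightPartMul (e : κ → M) : P₁ (𝐱 (E₂ e) + B₂ e) = 𝐱 (E₂ e) + B₂ e := by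
  rw [rightPartMul_apply, map_add, map_smul, S.P_P]
  match_scalars <;> simp [mul_sub]

theorem Q_add_leftPartMul (e : κ → M) : Q₁ (𝐱 (E₁ e) + B₁ e) = 𝐱 (E₁ e) + B₁ e := by
  rw [leftPartMul_apply, map_add, map_smul, S.Q_Q]
  match_scalars <;> simp [mul_sub]

/-- The relations satisfied by `e = dx`: the components `x · dx` and `dx · x` add up to `dx`, and
the trace of `x · dx` vanishes. -/
structure IsForm (e : κ → M) : Prop where
  contract_leftPart : ε₁ (E₁ e) = 0
  eq_add : e = E₁ e + E₂ e

variable {S x}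

namespace IsProjector

theorem P_leftMul_leftMul (hx : S.IsProjector x) (f : M) : P₁ (𝐱 (𝐱 f)) = 𝐱 (𝐱 f) :=
  act_leftMul_leftMul hx.P_mul f

theorem Q_leftMul_leftMul (hx : S.IsProjector x) (f : M) : Q₁ (𝐱 (𝐱 f)) = 𝐱 (𝐱 f) :=
  act_leftMul_leftMul hx.Q_mul f

theorem contract_leftMul (hx : S.IsProjector x) (f : M) : ε₁ (𝐱 f) = f := by
  simpa [contract_apply, Finset.sum_smul] using congrArg (· • f) hx.contract_eq_one

theorem P_leftMul_leftPart (hx : S.IsProjector x) (e : κ → M) : P₁ (𝐱 (E₁ e)) = 𝐱 (E₁ e) := by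
  have : 𝐱 (E₁ e) = shift S.mul (𝐱 (𝐱 e)) := by
    rw [leftPart_apply, leftMul_contract, leftMul_act, shift_mul]
  rw [this, P_shift_mul, hx.P_leftMul_leftMul]

theorem Q_leftMul_rightPart (hx : S.IsProjector x) (e : κ → M) : Q₁ (𝐱 (E₂ e)) = 𝐱 (E₂ e) := by
  have : 𝐱 (E₂ e) = τ⁻ • ε₃ (P₂ (𝐱 (𝐱 e))) := by
    rw [rightPart_apply, map_smul, leftMul_shift_contract, leftMul_act]
  rw [this, map_smul, act_shift_shift, ← shift_P_Q, hx.Q_leftMul_leftMul]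

theorem leftPart_leftPart (hx : S.IsProjector x) (e : κ → M) : E₁ (E₁ e) = E₁ e := by
  rw [leftPart_apply, hx.P_leftMul_leftPart, hx.contract_leftMul]

theorem leftPart_leftPartMul (hx : S.IsProjector x) (e : κ → M) : E₁ (B₁ e) = B₁ e := by
  calc E₁ (B₁ e) = τ • S.mul (Q₂ (𝐱 (𝐱 (E₁ e)))) := by
        rw [leftPartMul_apply, map_smul, ← leftMul_act]; rfl
    _ = τ • Q₁ (ε₁ (P₁ (𝐱 (𝐱 (E₁ e))))) := by rw [mul_shift_Q, mul_apply]
    _ = B₁ e := by rw [hx.P_leftMul_leftMul, hx.contract_leftMul, leftPartMul_apply]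

theorem P_leftPartMul (hx : S.IsProjector x) (e : κ → M) : P₁ (B₁ e) = B₁ e := by
  rw [leftPartMul_apply, map_smul, S.P_Q, hx.P_leftMul_leftPart]

theorem Q_rightPartMul (hx : S.IsProjector x) (e : κ → M) : Q₁ (B₂ e) = B₂ e := by
  rw [rightPartMul_apply, map_smul, ← S.P_Q, hx.Q_leftMul_rightPart]

end IsProjector

namespace IsForm

variable {e : κ → M}

theorem contract_eq_zero (he : S.IsForm x e) : ε₁ e = 0 := by
  have right : ε₁ (E₂ e) = 0 := by
    rw [rightPart_apply, map_smul, contract_shift, ← leftPart_apply, he.contract_leftPart,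
      smul_zero]
  rw [he.eq_add, map_add, he.contract_leftPart, right, add_zero]

theorem contract_leftMul_leftPart (he : S.IsForm x e) : ε₂ (𝐱 (E₁ e)) = 0 := by
  rw [← leftMul_contract, he.contract_leftPart, map_zero]

theorem rightPart_leftPart (hx : S.IsProjector x) (he : S.IsForm x e) : E₂ (E₁ e) = 0 := by
  rw [rightPart_apply, hx.P_leftMul_leftPart, he.contract_leftMul_leftPart, smul_zero]

theorem leftPart_rightPart (hx : S.IsProjector x) (he : S.IsForm x e) : E₁ (E₂ e) = 0 := by
  have := congrArg E₁ he.eq_add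
  rwa [map_add, hx.leftPart_leftPart, left_eq_add] at this

theorem rightPart_rightPart (hx : S.IsProjector x) (he : S.IsForm x e) : E₂ (E₂ e) = E₂ e := by
  have := congrArg E₂ he.eq_add
  rwa [map_add, he.rightPart_leftPart hx, zero_add, eq_comm] at this

theorem contract_Q_leftMul_leftPart (hx : S.IsProjector x) (he : S.IsForm x e) :
    ε₁ (Q₁ (𝐱 (E₁ e))) = 0 := by
  calc ε₁ (Q₁ (𝐱 (E₁ e))) = S.mul (Q₁ (𝐱 (E₁ e))) := by
        rw [mul_apply, S.P_Q, hx.P_leftMul_leftPart]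
    _ = 0 := by rw [mul_Q, he.contract_leftMul_leftPart]

theorem contract_leftPartMul (hx : S.IsProjector x) (he : S.IsForm x e) : ε₁ (B₁ e) = 0 := by
  rw [leftPartMul_apply, map_smul, he.contract_Q_leftMul_leftPart hx, smul_zero]

theorem leftPart_rightPartMul (hx : S.IsProjector x) (he : S.IsForm x e) : E₁ (B₂ e) = 0 := by
  calc E₁ (B₂ e) = τ⁻ • S.mul (P₂ (𝐱 (𝐱 (E₂ e)))) := by
        rw [rightPartMul_apply, map_smul, ← leftMul_act]; rfl
    _ = τ⁻ • S.mul (P₂ (Q₁ (𝐱 (𝐱 (E₂ e))))) := by rw [hx.Q_leftMul_leftMul]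
    _ = τ⁻ • ε₂ (P₂ (𝐱 (𝐱 (E₂ e)))) := by rw [S.shift_P_Q, mul_Q]
    _ = τ⁻ • 𝐱 (E₁ (E₂ e)) := by rw [← leftMul_act, ← leftMul_contract, ← leftPart_apply]
    _ = 0 := by rw [he.leftPart_rightPart hx, map_zero, smul_zero]

theorem rightPart_leftPartMul (hx : S.IsProjector x) (he : S.IsForm x e) : E₂ (B₁ e) = 0 := by
  calc E₂ (B₁ e) = ε₂ (P₁ (Q₂ (𝐱 (𝐱 (E₁ e))))) := by
        rw [rightPart_apply, leftPartMul_apply, map_smul, map_smul, map_smul, leftMul_act,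
          smul_smul, Units.inv_mul, one_smul]
    _ = ε₂ (Q₂ (𝐱 (𝐱 (E₁ e)))) := by rw [S.P_shift_Q, hx.P_leftMul_leftMul]
    _ = 𝐱 (ε₁ (Q₁ (𝐱 (E₁ e)))) := by rw [← leftMul_act, ← leftMul_contract]
    _ = 0 := by rw [he.contract_Q_leftMul_leftPart hx, map_zero]

theorem rightPart_rightPartMul (hx : S.IsProjector x) (he : S.IsForm x e) :
    E₂ (B₂ e) = B₂ e := by
  set y := P₁ (P₂ (𝐱 (𝐱 (E₂ e)))) with hy
  have P_y : P₂ y = y := by rw [hy, ← S.P_braid, hx.P_leftMul_leftMul]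
  have Q_y : Q₂ y = y := by
    rw [hy, ← S.P_shift_Q, ← leftMul_act, ← leftMul_act, ← S.P_Q, hx.Q_leftMul_rightPart]
  have contract_y : ε₂ y = ε₃ y := by
    calc ε₂ y = ε₂ (P₂ (Q₂ y)) := by rw [Q_y, P_y]
      _ = ε₃ y := funext fun a => S.contract_P_Q (y a)
  calc E₂ (B₂ e) = τ⁻ • τ⁻ • ε₂ y := by
        rw [rightPart_apply, rightPartMul_apply, map_smul, map_smul, map_smul, leftMul_act]
    _ = τ⁻ • P₁ (𝐱 (E₂ (E₂ e))) := by
        rw [contract_y, hy, ← act_shift_shift, rightPart_apply _ _ (E₂ e), ← leftMul_act,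
          ← leftMul_shift_contract, map_smul, map_smul]
    _ = B₂ e := by rw [he.rightPart_rightPart hx, rightPartMul_apply]

theorem shift_contract_leftPartMul (hx : S.IsProjector x) (he : S.IsForm x e) :
    ε₂ (B₁ e) = E₁ e := by
  calc ε₂ (B₁ e) = τ • S.mul (Q₁ (Q₁ (𝐱 (E₁ e)))) := by rw [leftPartMul_apply, map_smul, mul_Q]
    _ = S.mul (𝐱 (E₁ e)) := by
        rw [S.Q_Q, map_add, map_smul, map_smul, mul_Q, he.contract_leftMul_leftPart, smul_zero,
          add_zero, smul_smul, Units.mul_inv, one_smul]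
    _ = E₁ e := hx.leftPart_leftPart e

theorem shift_contract_rightPartMul (hx : S.IsProjector x) (he : S.IsForm x e) :
    ε₂ (B₂ e) = E₂ e := by
  rw [rightPartMul_apply, map_smul, ← rightPart_apply, he.rightPart_rightPart hx]

end IsForm

section FormMul

variable (S x)

/-- The products `dx_a · x_b`, with the coefficients on the left. -/
def formMul : (κ → M) →ₗ[k] (κ → κ → M) := B₁ + B₂

theorem formMul_apply (e : κ → M) : S.formMul x e = B₁ e + B₂ e := rfl

variable {S x} {e : κ → M}

theorem IsForm.leftPart_formMul (hx : S.IsProjector x) (he : S.IsForm x e) :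
    E₁ (S.formMul x e) = B₁ e := by
  rw [formMul_apply, map_add, hx.leftPart_leftPartMul, he.leftPart_rightPartMul hx, add_zero]

theorem IsForm.rightPart_formMul (hx : S.IsProjector x) (he : S.IsForm x e) :
    E₂ (S.formMul x e) = B₂ e := by
  rw [formMul_apply, map_add, he.rightPart_leftPartMul hx, he.rightPart_rightPartMul hx, zero_add]

theorem IsForm.formMul (hx : S.IsProjector x) (he : S.IsForm x e) :
    S.IsForm x (S.formMul x e) where
  contract_leftPart := by rw [he.leftPart_formMul hx, he.contract_leftPartMul hx]
  eq_add := by rw [he.leftPart_formMul hx, he.rightPart_formMul hx, formMul_apply]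

theorem IsForm.shift_contract_formMul (hx : S.IsProjector x) (he : S.IsForm x e) :
    ε₂ (S.formMul x e) = e := by
  rw [formMul_apply, map_add, he.shift_contract_leftPartMul hx, he.shift_contract_rightPartMul hx,
    ← he.eq_add]

theorem IsForm.leftMul_add_formMul (he : S.IsForm x e) :
    𝐱 e + S.formMul x e = (𝐱 (E₁ e) + B₁ e) + (𝐱 (E₂ e) + B₂ e) := by
  calc 𝐱 e + S.formMul x e = 𝐱 (E₁ e + E₂ e) + (B₁ e + B₂ e) := by
        rw [← he.eq_add, formMul_apply]
    _ = _ := by rw [map_add, add_add_add_comm]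

theorem IsForm.P_formMul (hx : S.IsProjector x) (he : S.IsForm x e) :
    P₁ (𝐱 e + S.formMul x e) = 𝐱 e + S.formMul x e := by
  rw [he.leftMul_add_formMul, map_add, S.P_add_rightPartMul, map_add, hx.P_leftMul_leftPart,
    hx.P_leftPartMul]

theorem IsForm.Q_formMul (hx : S.IsProjector x) (he : S.IsForm x e) :
    Q₁ (𝐱 e + S.formMul x e) = 𝐱 e + S.formMul x e := by
  rw [he.leftMul_add_formMul, map_add, S.Q_add_leftPartMul, map_add, hx.Q_leftMul_rightPart,
    hx.Q_rightPartMul]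

theorem IsForm.formMul_formMul (hx : S.IsProjector x) (he : S.IsForm x e) :
    S.formMul x (S.formMul x e) = τ • τ • Q₁ (Q₂ (𝐱 (𝐱 (E₁ e)))) +
      τ⁻ • τ⁻ • P₁ (P₂ (𝐱 (𝐱 (E₂ e)))) := by
  rw [formMul_apply, leftPartMul_apply, rightPartMul_apply, he.leftPart_formMul hx,
    he.rightPart_formMul hx, leftPartMul_apply, rightPartMul_apply]
  simp only [map_smul, leftMul_act]

theorem IsForm.shift_P_formMul_formMul (hx : S.IsProjector x) (he : S.IsForm x e) :
    P₂ (S.formMul x (S.formMul x e)) = S.formMul x (S.formMul x e) := by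
  have left : P₂ (Q₁ (Q₂ (𝐱 (𝐱 (E₁ e))))) = Q₁ (Q₂ (𝐱 (𝐱 (E₁ e)))) := by
    rw [S.shift_P_Q, ← leftMul_act, ← leftMul_act, S.P_Q, hx.P_leftMul_leftPart]
  have right : P₂ (P₁ (P₂ (𝐱 (𝐱 (E₂ e))))) = P₁ (P₂ (𝐱 (𝐱 (E₂ e)))) := by
    rw [← S.P_braid, hx.P_leftMul_leftMul]
  simp only [he.formMul_formMul hx, map_add, map_smul, left, right]

theorem IsForm.shift_Q_formMul_formMul (hx : S.IsProjector x) (he : S.IsForm x e) :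
    Q₂ (S.formMul x (S.formMul x e)) = S.formMul x (S.formMul x e) := by
  have left : Q₂ (Q₁ (Q₂ (𝐱 (𝐱 (E₁ e))))) = Q₁ (Q₂ (𝐱 (𝐱 (E₁ e)))) := by
    rw [← S.Q_braid, hx.Q_leftMul_leftMul]
  have right : Q₂ (P₁ (P₂ (𝐱 (𝐱 (E₂ e))))) = P₁ (P₂ (𝐱 (𝐱 (E₂ e)))) := by
    rw [← S.P_shift_Q, ← leftMul_act, ← leftMul_act, ← S.P_Q, hx.Q_leftMul_rightPart]
  simp only [he.formMul_formMul hx, map_add, map_smul, left, right]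

end FormMul

section LinearMaps

variable {M' : Type v} [AddCommGroup M'] [Module k M'] [Module A M'] [IsScalarTower k A M']
  (h : M →ₗ[A] M')

theorem leftPart_shift (e : κ → M) :
    E₁ (shift (h.restrictScalars k) e) = shift (h.restrictScalars k) (E₁ e) := by
  rw [leftPart_apply, leftPart_apply, leftMul_shift, act_shift_shift, contract_shift]

theorem rightPart_shift (e : κ → M) :
    E₂ (shift (h.restrictScalars k) e) = shift (h.restrictScalars k) (E₂ e) := by
  rw [rightPart_apply, rightPart_apply, map_smul, leftMul_shift, act_shift_shift]
  congr 1
  exact funext fun a => contract_shift _ (h.restrictScalars k) _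

theorem formMul_shift (e : κ → M) :
    S.formMul x (shift (h.restrictScalars k) e) =
      shift (shift (h.restrictScalars k)) (S.formMul x e) := by
  simp only [formMul_apply, leftPartMul_apply, rightPartMul_apply, leftPart_shift, rightPart_shift,
    leftMul_shift, act_shift_shift, map_add, map_smul]

end LinearMaps

section Forms

variable [DecidableEq κ]

/-- The basis of the free left module on symbols `dx_a`. -/
def freeForm : κ → κ → A := fun a => Pi.single a 1

variable (S x)

/-- The relations that define `IsForm`, in the free module on symbols `dx_a`. -/
def formRelations : Submodule A (κ → A) :=
  Submodule.span A (insert (ε₁ (E₁ freeForm)) (Set.range (freeForm - (E₁ freeForm + E₂ freeForm))))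

/-- The left module generated by forms `dx_a` subject to the relations in `IsForm`. -/
abbrev Forms : Type v := (κ → A) ⧸ S.formRelations x

/-- The generator `dx_a` of the module of forms. -/
def form : κ → S.Forms x :=
  shift ((S.formRelations x).mkQ.restrictScalars k) freeForm

variable {S x}

theorem isForm_form : S.IsForm x (S.form x) where
  contract_leftPart := by
    rw [form, leftPart_shift, contract_shift]
    exact (Submodule.Quotient.mk_eq_zero _).2 (Submodule.subset_span (Set.mem_insert _ _))
  eq_add := by
    rw [form, leftPart_shift, rightPart_shift]
    ext a
    rw [← sub_eq_zero]
    exact (Submodule.Quotient.mk_eq_zero _).2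
      (Submodule.subset_span (Set.mem_insert_of_mem _ (Set.mem_range_self a)))

theorem shift_linearCombination_freeForm (e : κ → M) :
    shift ((Fintype.linearCombination A e).restrictScalars k) freeForm = e := by
  ext a
  simp [freeForm]

/-- The linear map out of the module of forms with prescribed values on the generators. -/
def liftForm {e : κ → M} (he : S.IsForm x e) : S.Forms x →ₗ[A] M :=
  (S.formRelations x).liftQ (Fintype.linearCombination A e) <| by
    have lift_free := shift_linearCombination_freeForm (k := k) (A := A) e
    set l := Fintype.linearCombination A e
    have left : shift (l.restrictScalars k) (E₁ freeForm) = E₁ e := by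
      rw [← leftPart_shift, lift_free]
    have right : shift (l.restrictScalars k) (E₂ freeForm) = E₂ e := by
      rw [← rightPart_shift, lift_free]
    rw [formRelations, Submodule.span_le, Set.insert_subset_iff, Set.range_subset_iff]
    refine ⟨?_, fun a => ?_⟩
    · exact (contract_shift _ (l.restrictScalars k) _).symm.trans (left ▸ he.contract_leftPart)
    · have rel : shift (l.restrictScalars k) (freeForm - (E₁ freeForm + E₂ freeForm)) = 0 := by
        rw [map_sub, map_add, lift_free, left, right, ← he.eq_add, sub_self]
      exact congrFun rel a

theorem liftForm_form {e : κ → M} (he : S.IsForm x e) (a : κ) : liftForm he (S.form x a) = e a :=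
  congrFun (shift_linearCombination_freeForm (k := k) (A := A) e) a

theorem forms_hom_ext {M : Type*} [AddCommGroup M] [Module A M] {f g : S.Forms x →ₗ[A] M}
    (h : ∀ a, f (S.form x a) = g (S.form x a)) : f = g :=
  Submodule.linearMap_qext _ (LinearMap.pi_ext' fun a => LinearMap.ext_ring (h a))

theorem linearCombination_form :
    Fintype.linearCombination A (S.form x) = (S.formRelations x).mkQ :=
  LinearMap.pi_ext' fun a => LinearMap.ext_ring <| by
    simp [form, freeForm]

/-- The right multiplications `ω ↦ ω · x_b` on the module of forms, for all `b`. -/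
def formRightMul (hx : S.IsProjector x) : S.Forms x →ₗ[A] (κ → S.Forms x) :=
  liftForm (isForm_form.formMul hx)

theorem isProjector_formRightMul (hx : S.IsProjector x) :
    S.IsProjector fun b => MulOpposite.op (LinearMap.proj b ∘ₗ formRightMul hx) := by
  set ρ := formRightMul hx
  have ρ_form : shift (ρ.restrictScalars k) (S.form x) = S.formMul x (S.form x) :=
    funext (liftForm_form (isForm_form.formMul hx))
  have ρ_ρ_form (c a b : κ) :
      ρ (ρ (S.form x c) a) b = S.formMul x (S.formMul x (S.form x)) c a b := by
    rw [← ρ_form, formMul_shift, ← ρ_form]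
    rfl
  have fixed {m : κ → κ → κ → κ → k}
      (hm : shift (act m) (S.formMul x (S.formMul x (S.form x))) =
        S.formMul x (S.formMul x (S.form x))) :
      (act m fun a b => MulOpposite.op (LinearMap.proj a ∘ₗ ρ) *
        MulOpposite.op (LinearMap.proj b ∘ₗ ρ)) =
      fun a b => MulOpposite.op (LinearMap.proj a ∘ₗ ρ) *
        MulOpposite.op (LinearMap.proj b ∘ₗ ρ) := by
    ext a b : 2
    refine MulOpposite.unop_injective (forms_hom_ext fun c => ?_)
    simpa [act_apply, Finset.unop_sum, LinearMap.sum_apply, ρ_ρ_form] using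
      congrFun (congrFun (congrFun hm c) a) b
  refine ⟨fixed (isForm_form.shift_P_formMul_formMul hx),
    fixed (isForm_form.shift_Q_formMul_formMul hx),
    MulOpposite.unop_injective (forms_hom_ext fun c => ?_)⟩
  simpa [contract_apply, Finset.unop_sum, LinearMap.sum_apply, ← ρ_form] using
    congrFun (isForm_form.shift_contract_formMul hx) c

end Forms

theorem isProjector_inl_add_inr [Module Aᵐᵒᵖ M] [SMulCommClass A Aᵐᵒᵖ M] [IsScalarTower k Aᵐᵒᵖ M]
    {e : κ → M} (hx : S.IsProjector x) (he : S.IsForm x e)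
    (mul : ∀ a b, MulOpposite.op (x b) • e a = S.formMul x e a b) :
    S.IsProjector fun a => TrivSqZeroExt.inl (x a) + TrivSqZeroExt.inr (e a) := by
  have mul_eq : (fun a b => (TrivSqZeroExt.inl (x a) + TrivSqZeroExt.inr (e a)) *
      (TrivSqZeroExt.inl (x b) + TrivSqZeroExt.inr (e b))) =
      shift (shift (TrivSqZeroExt.inlAlgHom k A M).toLinearMap) (fun a b => x a * x b) +
        shift (shift ((TrivSqZeroExt.inrHom A M).restrictScalars k)) (𝐱 e + S.formMul x e) := by
    ext a b <;> simp [← mul]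
  refine ⟨?_, ?_, ?_⟩
  · rw [mul_eq, map_add, act_shift_shift, act_shift_shift, hx.P_mul, he.P_formMul hx]
  · rw [mul_eq, map_add, act_shift_shift, act_shift_shift, hx.Q_mul, he.Q_formMul hx]
  · calc ε₁ (fun a => TrivSqZeroExt.inl (x a) + TrivSqZeroExt.inr (e a))
        = ε₁ (shift (TrivSqZeroExt.inlAlgHom k A M).toLinearMap x +
            shift ((TrivSqZeroExt.inrHom A M).restrictScalars k) e) := rfl
      _ = 1 := by
        rw [map_add, contract_shift, contract_shift, hx.contract_eq_one, he.contract_eq_zero,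
          map_zero, add_zero]
        exact map_one (TrivSqZeroExt.inlAlgHom k A M)

end ProjectorSystem
section YangBaxter

variable {k : Type u} [CommRing k] {ι : Type v} [Fintype ι]
variable {M : Type*} [AddCommGroup M] [Module k M]

theorem act_smul (r : k) (m : ι → ι → ι → ι → k) (f : ι → ι → M) : act (r • m) f = r • act m f := by
  ext; simp [act_apply, Finset.smul_sum, mul_smul]

/-- The partial transpose that turns a braiding `V ⊗ V → V ⊗ V` into a map `V ⊗ V* → V* ⊗ V`. -/
def rot (m : ι → ι → ι → ι → k) : ι → ι → ι → ι → k := fun i j l n => m l i n j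

/-- The Yang–Baxter equation `a₁ b₂ c₁ = c₂ b₁ a₂` for operators on two of three legs. -/
def YangBaxter (a b c : ι → ι → ι → ι → k) : Prop :=
  ∀ i j l i' j' l', ∑ x, ∑ y, ∑ z, a x y i' j' * b z l y l' * c i j x z =
    ∑ x, ∑ y, ∑ z, c x y j' l' * b i z i' x * a j l z y

theorem act_shift_act_act (a b c : ι → ι → ι → ι → k) (f : ι → ι → ι → M) (i' j' l' : ι) :
    act a (shift (act b) (act c f)) i' j' l' =
      ∑ i, ∑ j, ∑ l, (∑ x, ∑ y, ∑ z, a x y i' j' * b z l y l' * c i j x z) • f i j l := by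
  simp only [act_apply, shift_apply, Finset.sum_apply, Pi.smul_apply, Finset.smul_sum,
    Finset.sum_smul, smul_smul, ← Fintype.sum_prod_type', ← mul_assoc]
  exact Fintype.sum_equiv ⟨fun ⟨x, y, z, l, i, j⟩ => (i, j, l, x, y, z),
    fun ⟨i, j, l, x, y, z⟩ => (x, y, z, l, i, j), fun _ => rfl, fun _ => rfl⟩ _ _ fun _ => rfl

theorem shift_act_act_shift (a b c : ι → ι → ι → ι → k) (f : ι → ι → ι → M) (i' j' l' : ι) :
    shift (act c) (act b (shift (act a) f)) i' j' l' =
      ∑ i, ∑ j, ∑ l, (∑ x, ∑ y, ∑ z, c x y j' l' * b i z i' x * a j l z y) • f i j l := by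
  simp only [act_apply, shift_apply, Finset.sum_apply, Pi.smul_apply, Finset.smul_sum,
    Finset.sum_smul, smul_smul, ← Fintype.sum_prod_type', ← mul_assoc]
  exact Fintype.sum_equiv ⟨fun ⟨x, y, i, z, j, l⟩ => (i, j, l, x, y, z),
    fun ⟨i, j, l, x, y, z⟩ => (x, y, i, z, j, l), fun _ => rfl, fun _ => rfl⟩ _ _ fun _ => rfl

namespace YangBaxter

variable {a b c : ι → ι → ι → ι → k}

theorem act_eq (h : YangBaxter a b c) (f : ι → ι → ι → M) :
    act a (shift (act b) (act c f)) = shift (act c) (act b (shift (act a) f)) := by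
  ext
  simp only [act_shift_act_act, shift_act_act_shift, h _ _ _ _ _ _]

theorem of_act_eq
    (h : ∀ f : ι → ι → ι → k,
      act a (shift (act b) (act c f)) = shift (act c) (act b (shift (act a) f))) :
    YangBaxter a b c := by
  classical
  intro i j l i' j' l'
  have := congrFun (congrFun (congrFun (h (Pi.single i (Pi.single j (Pi.single l 1)))) i') j') l'
  simpa [act_shift_act_act, shift_act_act_shift, Pi.single_apply, ite_apply] using this

theorem smul (h : YangBaxter a b c) (r s t : k) : YangBaxter (r • a) (s • b) (t • c) := by
  intro i j l i' j' l'
  simpa only [Pi.smul_apply, smul_eq_mul, Finset.mul_sum, mul_assoc, mul_comm, mul_left_comm] using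
    congrArg (r * s * t * ·) (h i j l i' j' l')

protected theorem rot (h : YangBaxter c a b) : YangBaxter (rot a) (rot b) c := by
  intro i j l i' j' l'
  calc ∑ x, ∑ y, ∑ z, a i' x j' y * b y z l' l * c i j x z
      = ∑ y, ∑ z, ∑ x, b y z l' l * a i' x j' y * c i j x z := by
        rw [Finset.sum_comm]
        refine Finset.sum_congr rfl fun y _ => Finset.sum_comm.trans ?_
        simp only [mul_comm (b _ _ _ _)]
    _ = ∑ x, ∑ y, ∑ z, c x y j' l' * b i' i x z * a z j y l := by
        simp only [← h i' i j j' l' l, mul_right_comm]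

end YangBaxter

variable (k) in
/-- The evaluation of the first leg on the second. -/
def pairing : (ι → ι → M) →ₗ[k] M where
  toFun f := ∑ i, f i i
  map_add' f g := by simp [Finset.sum_add_distrib]
  map_smul' r f := by simp [Finset.smul_sum]

theorem pairing_apply (f : ι → ι → M) : pairing k f = ∑ i, f i i := rfl

theorem pairing_shift_rot (m : ι → ι → ι → ι → k) (f : ι → ι → ι → M) :
    pairing k (shift (act (rot m)) f) = shift (pairing k) (act m f) := by
  ext n
  simp only [pairing_apply, Finset.sum_apply, shift_apply, act_apply, rot]
  simp only [← Fintype.sum_prod_type']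
  exact Fintype.sum_equiv ⟨fun ⟨a, b, c⟩ => (c, a, b), fun ⟨c, a, b⟩ => (a, b, c),
    fun _ => rfl, fun _ => rfl⟩ _ _ fun _ => rfl

end YangBaxter

section RMatrix

variable {N : ℕ} {q : ℝ} {M : Type*} [AddCommGroup M] [Module ℂ M]

theorem Rmat_eq_add (q : ℝ) (i j k l : Fin N) : Rmat q i j k l =
    (if i = l then if j = k then (if k = l then (q : ℂ) else 1) else 0 else 0)
    + (if i = k then if j = l then (if k < l then (q : ℂ) - (q : ℂ)⁻¹ else 0) else 0 else 0) := by
  unfold Rmat; grind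

theorem act_Rmat_apply (q : ℝ) (f : Fin N → Fin N → M) (k l : Fin N) :
    act (Rmat q) f k l = (if k = l then (q : ℂ) else 1) • f l k
      + (if k < l then (q : ℂ) - (q : ℂ)⁻¹ else 0) • f k l := by
  simp only [act_apply, Rmat_eq_add, add_smul, Finset.sum_add_distrib, ite_smul, zero_smul]
  simp

theorem act_Rmat_apply_self (q : ℝ) (f : Fin N → Fin N → M) (k : Fin N) :
    act (Rmat q) f k k = (q : ℂ) • f k k := by
  simp [act_Rmat_apply]

theorem act_Rmat_apply_of_lt (q : ℝ) (f : Fin N → Fin N → M) {k l : Fin N} (h : k < l) :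
    act (Rmat q) f k l = f l k + ((q : ℂ) - (q : ℂ)⁻¹) • f k l := by
  simp [act_Rmat_apply, h, h.ne]

theorem act_Rmat_apply_of_gt (q : ℝ) (f : Fin N → Fin N → M) {k l : Fin N} (h : l < k) :
    act (Rmat q) f k l = f l k := by
  simp [act_Rmat_apply, h.not_gt, h.ne']

theorem act_Rminus (q : ℝ) (f : Fin N → Fin N → M) :
    act (Rminus q) f = act (Rmat q) f - ((q : ℂ) - (q : ℂ)⁻¹) • f := by
  ext k l
  simp only [act_apply, Rminus, sub_smul, Finset.sum_sub_distrib, Pi.sub_apply, Pi.smul_apply]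
  simp [ite_and, sub_smul]

theorem act_Rmat_act_Rmat (hq : q ≠ 0) (f : Fin N → Fin N → M) :
    act (Rmat q) (act (Rmat q) f) = f + ((q : ℂ) - (q : ℂ)⁻¹) • act (Rmat q) f := by
  have hq' : (q : ℂ) ≠ 0 := mod_cast hq
  ext a b
  rcases lt_trichotomy a b with h | rfl | h
  · simp only [act_Rmat_apply_of_lt, act_Rmat_apply_of_gt, h, Pi.add_apply, Pi.smul_apply]
  · simp only [act_Rmat_apply_self, Pi.add_apply, Pi.smul_apply]
    match_scalars
    field_simp
    ring
  · simp only [act_Rmat_apply_of_lt, act_Rmat_apply_of_gt, h, Pi.add_apply, Pi.smul_apply]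

theorem act_Rmat_act_Rminus (hq : q ≠ 0) (f : Fin N → Fin N → M) :
    act (Rmat q) (act (Rminus q) f) = f := by
  rw [act_Rminus, map_sub, map_smul, act_Rmat_act_Rmat hq, add_sub_cancel_right]

theorem act_Rminus_act_Rmat (hq : q ≠ 0) (f : Fin N → Fin N → M) :
    act (Rminus q) (act (Rmat q) f) = f := by
  rw [act_Rminus, act_Rmat_act_Rmat hq, add_sub_cancel_right]

theorem act_Rmat_braid (hq : q ≠ 0) (f : Fin N → Fin N → Fin N → M) :
    act (Rmat q) (shift (act (Rmat q)) (act (Rmat q) f)) =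
      shift (act (Rmat q)) (act (Rmat q) (shift (act (Rmat q)) f)) := by
  have hq' : (q : ℂ) ≠ 0 := mod_cast hq
  ext a b c
  rcases lt_trichotomy a b with h | h | h <;> rcases lt_trichotomy b c with h' | h' | h' <;>
    rcases lt_trichotomy a c with h'' | h'' | h''
  all_goals
    first
    | exfalso; order
    | subst_vars
      simp only [act_Rmat_apply_self, act_Rmat_apply_of_lt, act_Rmat_apply_of_gt, *, shift_apply,
        Pi.add_apply, Pi.smul_apply]
      try match_scalars <;> field_simp <;> ring

theorem yangBaxter_Rmat (hq : q ≠ 0) : YangBaxter (Rmat q (N := N)) (Rmat q) (Rmat q) :=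
  .of_act_eq (act_Rmat_braid hq)

theorem yangBaxter_Rminus_Rmat_Rmat (hq : q ≠ 0) :
    YangBaxter (Rminus q (N := N)) (Rmat q) (Rmat q) := by
  refine .of_act_eq fun f => ?_
  have cancel : shift (act (Rmat q)) (shift (act (Rminus q)) f) = f :=
    funext fun i => act_Rmat_act_Rminus hq (f i)
  conv_lhs => rw [← cancel, ← act_Rmat_braid hq, act_Rminus_act_Rmat hq]

theorem yangBaxter_Rminus (hq : q ≠ 0) :
    YangBaxter (Rminus q (N := N)) (Rminus q) (Rminus q) := by
  refine .of_act_eq fun f => ?_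
  have shift_Rmat_Rminus (g : Fin N → Fin N → Fin N → ℂ) :
      shift (act (Rmat q)) (shift (act (Rminus q)) g) = g :=
    funext fun i => act_Rmat_act_Rminus hq (g i)
  have shift_Rminus_Rmat (g : Fin N → Fin N → Fin N → ℂ) :
      shift (act (Rminus q)) (shift (act (Rmat q)) g) = g :=
    funext fun i => act_Rminus_act_Rmat hq (g i)
  have braid := act_Rmat_braid hq (shift (act (Rminus q)) (act (Rminus q)
    (shift (act (Rminus q)) f)))
  rw [shift_Rmat_Rminus, act_Rmat_act_Rminus hq, shift_Rmat_Rminus] at braid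
  conv_lhs => rw [← braid]
  rw [act_Rminus_act_Rmat hq, shift_Rminus_Rmat, act_Rminus_act_Rmat hq]

theorem act_Rc_apply (q : ℝ) (f : Fin N → Fin N → M) (k l : Fin N) :
    act (Rc q) f k l = act (Rmat q) (fun i j => f j i) l k := by
  have transpose (i j : Fin N) : Rc q i j k l = Rmat q j i l k := by
    simp only [Rc, Rmat]; grind
  simp only [act_apply, transpose]
  exact Finset.sum_comm

theorem act_Rc_act_Rc (hq : q ≠ 0) (f : Fin N → Fin N → M) :
    act (Rc q) (act (Rc q) f) = f + ((q : ℂ) - (q : ℂ)⁻¹) • act (Rc q) f := by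
  ext k l
  simp only [act_Rc_apply, act_Rmat_act_Rmat hq, Pi.add_apply, Pi.smul_apply]

end RMatrix

section Telescoping

variable {k M : Type*} [CommRing k] [AddCommGroup M] [Module k M] {N : ℕ}

theorem sum_pow_smul_add_tail (r : k) (f : Fin N → M) {n : ℕ}
    (hn : n ≤ N) :
    ∑ i with n ≤ Fin.val i, r ^ (i : ℕ) • (f i + (1 - r) • ∑ j with i < j, f j) =
      r ^ n • ∑ i with n ≤ Fin.val i, f i := by
  induction hn using Nat.decreasingInduction with
  | self => simp [Finset.filter_false_of_mem]
  | of_succ n hn ih =>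
    have split (g : Fin N → M) : ∑ i with n ≤ Fin.val i, g i =
        g ⟨n, hn⟩ + ∑ i with n + 1 ≤ Fin.val i, g i := by
      rw [← Finset.sum_insert (by simp)]
      congr 1
      ext i
      simp only [Finset.mem_filter, Finset.mem_insert, Finset.mem_univ, true_and, Fin.ext_iff]
      omega
    rw [split, ih, split]
    change r ^ n • (f ⟨n, hn⟩ + (1 - r) • ∑ j with n + 1 ≤ Fin.val j, f j) + _ = _
    module

theorem sum_Ioi_pow_smul_add_tail (r : k) (f : Fin N → M)
    (m : Fin N) :
    ∑ i with m < i, r ^ (i : ℕ) • (f i + (1 - r) • ∑ j with i < j, f j) =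
      r ^ ((m : ℕ) + 1) • ∑ i with m < i, f i :=
  sum_pow_smul_add_tail r f m.is_lt

end Telescoping

section Braidings

variable {N : ℕ}

/-- The braiding `V ⊗ V → V ⊗ V`, normalised so that it has the eigenvalue `1`. -/
def braidVV (q : ℝ) : Fin N → Fin N → Fin N → Fin N → ℂ := (q : ℂ) • Rminus q

/-- The braiding `V* ⊗ V* → V* ⊗ V*`, normalised so that it has the eigenvalue `1`. -/
def braidDD (q : ℝ) : Fin N → Fin N → Fin N → Fin N → ℂ := (q : ℂ)⁻¹ • Rc q

/-- The braiding `V ⊗ V* → V* ⊗ V`. -/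
def braidVD (q : ℝ) : Fin N → Fin N → Fin N → Fin N → ℂ := (q : ℂ)⁻¹ • Rr q

/-- The braiding `V* ⊗ V → V ⊗ V*`, the inverse of `braidVD`. -/
def braidDV (q : ℝ) : Fin N → Fin N → Fin N → Fin N → ℂ := (q : ℂ) • Rlm q

variable {q : ℝ}

theorem yangBaxter_VV (hq : q ≠ 0) :
    YangBaxter (braidVV q (N := N)) (braidVV q) (braidVV q) :=
  (yangBaxter_Rminus hq).smul _ _ _

theorem yangBaxter_VD_VD_VV (hq : q ≠ 0) :
    YangBaxter (braidVD q (N := N)) (braidVD q) (braidVV q) :=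
  (yangBaxter_Rminus_Rmat_Rmat hq).rot.smul _ _ _

theorem yangBaxter_DD_VD_VD (hq : q ≠ 0) :
    YangBaxter (braidDD q (N := N)) (braidVD q) (braidVD q) :=
  (yangBaxter_Rmat hq).rot.rot.smul _ _ _

theorem yangBaxter_DD (hq : q ≠ 0) :
    YangBaxter (braidDD q (N := N)) (braidDD q) (braidDD q) :=
  (yangBaxter_Rmat hq).rot.rot.rot.smul _ _ _

variable {M : Type*} [AddCommGroup M] [Module ℂ M]

theorem act_braidVV_act_braidVV (hq : q ≠ 0) (f : Fin N → Fin N → M) :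
    act (braidVV q) (act (braidVV q) f) =
      (q : ℂ) ^ 2 • f + (1 - (q : ℂ) ^ 2) • act (braidVV q) f := by
  have hq' : (q : ℂ) ≠ 0 := mod_cast hq
  simp only [braidVV, act_smul, map_smul]
  nth_rw 2 [act_Rminus]
  rw [map_sub, map_smul, act_Rminus_act_Rmat hq]
  match_scalars <;> field_simp
  ring

theorem act_braidDD_act_braidDD (hq : q ≠ 0) (f : Fin N → Fin N → M) :
    act (braidDD q) (act (braidDD q) f) =
      ((q : ℂ) ^ 2)⁻¹ • f + (1 - ((q : ℂ) ^ 2)⁻¹) • act (braidDD q) f := by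
  have hq' : (q : ℂ) ≠ 0 := mod_cast hq
  simp only [braidDD, act_smul, map_smul, act_Rc_act_Rc hq]
  match_scalars <;> field_simp

theorem act_apply_of_eq_flip_add_diagonal {m : Fin N → Fin N → Fin N → Fin N → ℂ} {α : ℂ}
    {γ : Fin N → Fin N → ℂ} {k l : Fin N}
    (hm : ∀ i j, m i j k l = (if j = k then if i = l then (if k = l then α else 1) else 0 else 0) +
      if i = j then if k = l then (if k < i then γ k i else 0) else 0 else 0)
    (f : Fin N → Fin N → M) :
    act m f k l = if k = l then α • f k k + ∑ i with k < i, γ k i • f i i else f l k := by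
  simp only [act_apply, hm, add_smul, Finset.sum_add_distrib, ite_smul, zero_smul]
  by_cases h : k = l
  · simp [h, Finset.sum_filter]
  · simp [h]

theorem act_braidVD_apply (hq : q ≠ 0) (f : Fin N → Fin N → M) (k l : Fin N) :
    act (braidVD q) f k l =
      if k = l then f k k + (1 - ((q : ℂ) ^ 2)⁻¹) • ∑ i with k < i, f i i
      else (q : ℂ)⁻¹ • f l k := by
  have hq' : (q : ℂ) ≠ 0 := mod_cast hq
  rw [braidVD, act_smul, Pi.smul_apply, Pi.smul_apply,
    act_apply_of_eq_flip_add_diagonal (α := q) (γ := fun _ _ => (q : ℂ) - (q : ℂ)⁻¹)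
      (fun i j => by unfold Rr Rmat; grind)]
  split_ifs
  · rw [smul_add, inv_smul_smul₀ hq', ← Finset.smul_sum, smul_smul]
    congr 2
    field_simp
  · rfl

theorem pw_two_mul_iv_sub (hq : q ≠ 0) (k i : Fin N) :
    pw q (2 * iv k - 2 * iv i) = ((q : ℂ) ^ 2) ^ (k : ℕ) * ((q : ℂ) ^ 2)⁻¹ ^ (i : ℕ) := by
  have hq' : (q : ℂ) ≠ 0 := mod_cast hq
  rw [inv_pow, ← div_eq_mul_inv, ← pow_mul, ← pow_mul, ← zpow_natCast, ← zpow_natCast,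
    ← zpow_sub₀ hq', pw, iv, iv]
  congr 1
  push_cast
  ring

theorem act_braidDV_apply (hq : q ≠ 0) (f : Fin N → Fin N → M) (k l : Fin N) :
    act (braidDV q) f k l =
      if k = l then ((q : ℂ) ^ 2) ^ (k : ℕ) • (((q : ℂ) ^ 2)⁻¹ ^ (k : ℕ) • f k k +
        (1 - (q : ℂ) ^ 2) • ∑ i with k < i, ((q : ℂ) ^ 2)⁻¹ ^ (i : ℕ) • f i i)
      else (q : ℂ) • f l k := by
  have hq' : (q : ℂ) ≠ 0 := mod_cast hq
  have pw_zero : pw q 0 = 1 := zpow_zero _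
  rw [braidDV, act_smul, Pi.smul_apply, Pi.smul_apply,
    act_apply_of_eq_flip_add_diagonal (α := (q : ℂ)⁻¹)
      (γ := fun k i => -(((q : ℂ) - (q : ℂ)⁻¹) * pw q (2 * iv k - 2 * iv i)))
      (fun i j => by unfold Rlm Rminus Rmat; grind)]
  split_ifs
  · rw [smul_add, smul_add, smul_inv_smul₀ hq', smul_smul _ _ (f k k), ← mul_pow,
      mul_inv_cancel₀ (pow_ne_zero 2 hq'), one_pow, one_smul]
    simp only [Finset.smul_sum]
    congr 1
    refine Finset.sum_congr rfl fun i _ => ?_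
    simp only [smul_smul, pw_two_mul_iv_sub hq]
    congr 1
    field_simp
    ring
  · rfl

/-- The evaluation `V ⊗ V* → ℂ`. -/
def pairingVD (q : ℝ) : (Fin N → Fin N → M) →ₗ[ℂ] M where
  toFun f := ∑ i : Fin N, ((q : ℂ) ^ 2)⁻¹ ^ (i : ℕ) • f i i
  map_add' f g := by simp [Finset.sum_add_distrib]
  map_smul' r f := by simp only [Finset.smul_sum, smul_comm r, Pi.smul_apply, RingHom.id_apply]

theorem pairingVD_apply (q : ℝ) (f : Fin N → Fin N → M) :
    pairingVD q f = ∑ i : Fin N, ((q : ℂ) ^ 2)⁻¹ ^ (i : ℕ) • f i i := rfl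

theorem pairing_act_braidDV (hq : q ≠ 0) (f : Fin N → Fin N → M) :
    pairing ℂ (act (braidDV q) f) = pairingVD q f := by
  have telescope := sum_pow_smul_add_tail ((q : ℂ) ^ 2)
    (fun i => ((q : ℂ) ^ 2)⁻¹ ^ (i : ℕ) • f i i) (Nat.zero_le N)
  simp only [Nat.zero_le, Finset.filter_true, pow_zero, one_smul] at telescope
  simp only [pairing_apply, act_braidDV_apply hq, if_true, telescope, pairingVD_apply]

theorem act_braidDV_act_braidVD (hq : q ≠ 0) (f : Fin N → Fin N → M) :
    act (braidDV q) (act (braidVD q) f) = f := by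
  have hq' : (q : ℂ) ≠ 0 := mod_cast hq
  ext k l
  rw [act_braidDV_apply hq]
  split_ifs with h
  · subst h
    simp only [act_braidVD_apply hq, if_true]
    rw [sum_Ioi_pow_smul_add_tail _ fun i => f i i, inv_pow, inv_pow, pow_succ _ (k : ℕ)]
    match_scalars <;> field_simp
    ring
  · rw [act_braidVD_apply hq, if_neg (Ne.symm h), smul_inv_smul₀ hq']

theorem act_braidVD_act_braidDV (hq : q ≠ 0) (f : Fin N → Fin N → M) :
    act (braidVD q) (act (braidDV q) f) = f := by
  have hq' : (q : ℂ) ≠ 0 := mod_cast hq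
  ext k l
  rw [act_braidVD_apply hq]
  split_ifs with h
  · subst h
    simp only [act_braidDV_apply hq, if_true]
    rw [sum_Ioi_pow_smul_add_tail _ fun i : Fin N => ((q : ℂ) ^ 2)⁻¹ ^ (i : ℕ) • f i i, inv_pow,
      pow_succ _ (k : ℕ)]
    match_scalars <;> field_simp
    ring
  · rw [act_braidDV_apply hq, if_neg (Ne.symm h), inv_smul_smul₀ hq']

theorem pairing_shift_VD_act_VV (hq : q ≠ 0) (f : Fin N → Fin N → Fin N → M) :
    pairing ℂ (shift (act (braidVD q)) (act (braidVV q) f)) = shift (pairing ℂ) f := by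
  have hq' : (q : ℂ) ≠ 0 := mod_cast hq
  have rotated : braidVD q (N := N) = rot ((q : ℂ)⁻¹ • Rmat q) := rfl
  rw [rotated, pairing_shift_rot, braidVV, act_smul, act_smul, map_smul, map_smul,
    map_smul, inv_smul_smul₀ hq', act_Rmat_act_Rminus hq]

theorem pairing_shift_DD (q : ℝ) (f : Fin N → Fin N → Fin N → M) :
    pairing ℂ (shift (act (braidDD q)) f) = shift (pairing ℂ) (act (braidVD q) f) :=
  pairing_shift_rot (braidVD q) f

end Braidings

section PairLegs

variable {N : ℕ}

/-- The braiding of the factors `V` of two legs `V ⊗ V*`. -/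
def pairP (q : ℝ) (a b c d : Fin N × Fin N) : ℂ :=
  q * RCPm q a.1 a.2 b.1 b.2 c.1 c.2 d.1 d.2

/-- The braiding of the factors `V*` of two legs `V ⊗ V*`. -/
def pairQ (q : ℝ) (a b c d : Fin N × Fin N) : ℂ :=
  (q : ℂ)⁻¹ * RCPc q a.1 a.2 b.1 b.2 c.1 c.2 d.1 d.2

variable {q : ℝ} {M : Type*} [AddCommGroup M] [Module ℂ M]

/-- A leg `V ⊗ V*` as two legs. -/
def splitLeg : (Fin N × Fin N → M) →ₗ[ℂ] (Fin N → Fin N → M) :=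
  (LinearEquiv.curry ℂ M _ _).toLinearMap

@[simp] theorem splitLeg_apply (f : Fin N × Fin N → M) (i j : Fin N) :
    splitLeg f i j = f (i, j) := rfl

theorem splitLeg_injective : Function.Injective (splitLeg (N := N) (M := M)) :=
  (LinearEquiv.curry ℂ M _ _).injective

local notation "P₁" => act (braidVV q)
local notation "P₂" => shift (act (braidVV q))
local notation "C₂" => shift (act (braidDV q))
local notation "D₂" => shift (act (braidVD q))
local notation "Q₃" => shift (shift (act (braidDD q)))
local notation "Q₄" => shift (shift (shift (act (braidDD q))))
local notation "Q₅" => shift (shift (shift (shift (act (braidDD q)))))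
local notation "U₂" => shift (pairing ℂ)
local notation "U₃" => shift (shift (pairing ℂ))

variable (q) in
/-- Two legs `V ⊗ V*` rearranged to `V ⊗ V ⊗ V* ⊗ V*`. -/
def untangle₂ : (Fin N × Fin N → Fin N × Fin N → M) →ₗ[ℂ] (Fin N → Fin N → Fin N → Fin N → M) :=
  C₂ ∘ₗ splitLeg (M := Fin N → Fin N → M) ∘ₗ shift (splitLeg (M := M))

variable (q) in
/-- Three legs `V ⊗ V*` rearranged to `V ⊗ V ⊗ V ⊗ V* ⊗ V* ⊗ V*`. -/
def untangle₃ (f : Fin N × Fin N → Fin N × Fin N → Fin N × Fin N → M) :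
    Fin N → Fin N → Fin N → Fin N → Fin N → Fin N → M :=
  fun i j => act (braidDV q) (C₂ (untangle₂ q (fun a b l l' => f a b (l, l')) i j))

theorem untangle₂_apply (f : Fin N × Fin N → Fin N × Fin N → M) :
    untangle₂ q f = C₂ (splitLeg (shift splitLeg f)) := rfl

theorem shift_VD_untangle₂ (hq : q ≠ 0) (f : Fin N × Fin N → Fin N × Fin N → M) :
    D₂ (untangle₂ q f) = splitLeg (shift splitLeg f) :=
  funext fun _ => act_braidVD_act_braidDV hq _

theorem untangle₂_injective (hq : q ≠ 0) :
    Function.Injective (untangle₂ q (N := N) (M := M)) := fun f g h => by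
  have split_eq : splitLeg (shift splitLeg f) = splitLeg (shift splitLeg g) := by
    rw [← shift_VD_untangle₂ hq, h, shift_VD_untangle₂ hq]
  exact splitLeg_injective.comp_left (splitLeg_injective split_eq)

theorem untangle₃_apply (f : Fin N × Fin N → Fin N × Fin N → Fin N × Fin N → M) (i : Fin N) :
    untangle₃ q f i = C₂ (act (braidDV q) (splitLeg (shift (untangle₂ q) f) i)) := by
  let T : (Fin N → Fin N → Fin N → M) →ₗ[ℂ] (Fin N → Fin N → Fin N → M) := act (braidDV q)
  change C₂ (shift (shift T) (act (braidDV q) fun i' j j' l l' => f (i, i') (j, j') (l, l'))) = _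
  rw [← act_shift_shift]
  rfl

theorem act_braidDV_injective (hq : q ≠ 0) :
    Function.Injective fun f : Fin N → Fin N → M => act (braidDV q) f :=
  Function.LeftInverse.injective (g := act (braidVD q)) (act_braidVD_act_braidDV hq)

theorem untangle₃_injective (hq : q ≠ 0) :
    Function.Injective (untangle₃ q (N := N) (M := M)) := fun _ _ h =>
  splitLeg_injective.comp_left.comp_left <| untangle₂_injective hq <|
    ((act_braidDV_injective hq).comp (act_braidDV_injective hq).comp_left).comp_left.comp_left h

theorem splitLeg_act_pairP (hq : q ≠ 0) (f : Fin N × Fin N → Fin N × Fin N → M) :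
    splitLeg (shift splitLeg (act (pairP q) f)) = D₂ (P₁ (untangle₂ q f)) := by
  have hq' : (q : ℂ) ≠ 0 := mod_cast hq
  ext i j k l
  have sum_last (s t u : Fin N) :
      ∑ v, ((q : ℂ) * RCPm q s t u v i j k l) • f (s, t) (u, v) =
        ((q : ℂ) * ∑ a, ∑ b, ∑ c, Rlm q t u a b * Rminus q s a i c * Rr q c b j k) •
          f (s, t) (u, l) := by
    rw [Finset.sum_eq_single l (fun v _ hv => by simp [RCPm, hv]) (by simp)]
    simp [RCPm]
  simp only [splitLeg_apply, shift_apply, act_apply, pairP, Fintype.sum_prod_type, sum_last]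
  simp only [untangle₂_apply, splitLeg_apply, shift_apply, act_apply, Finset.sum_apply,
    Pi.smul_apply, Finset.smul_sum, Finset.sum_smul, Finset.mul_sum, smul_smul,
    ← Fintype.sum_prod_type']
  refine Fintype.sum_equiv ⟨fun ⟨s, t, u, a, b, c⟩ => (c, b, s, a, t, u),
    fun ⟨c, b, s, a, t, u⟩ => (s, t, u, a, b, c), fun _ => rfl, fun _ => rfl⟩ _ _ fun _ => ?_
  simp only [Equiv.coe_fn_mk, braidVV, braidVD, braidDV, Pi.smul_apply, smul_eq_mul]
  congr 1
  field_simp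

theorem splitLeg_act_pairQ (hq : q ≠ 0) (f : Fin N × Fin N → Fin N × Fin N → M) :
    splitLeg (shift splitLeg (act (pairQ q) f)) = D₂ (Q₃ (untangle₂ q f)) := by
  have hq' : (q : ℂ) ≠ 0 := mod_cast hq
  ext i j k l
  simp only [splitLeg_apply, shift_apply, act_apply, pairQ, Fintype.sum_prod_type]
  rw [Finset.sum_eq_single i (fun s _ hs => by simp [RCPc, hs]) (by simp)]
  simp only [untangle₂_apply, splitLeg_apply, shift_apply, act_apply, Finset.sum_apply,
    Pi.smul_apply, Finset.smul_sum, Finset.sum_smul, Finset.mul_sum, smul_smul, RCPc, if_true,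
    one_mul, ← Fintype.sum_prod_type']
  refine Fintype.sum_equiv ⟨fun ⟨t, u, v, a, b, c⟩ => (a, c, b, v, t, u),
    fun ⟨a, c, b, v, t, u⟩ => (t, u, v, a, b, c), fun _ => rfl, fun _ => rfl⟩ _ _ fun _ => ?_
  simp only [Equiv.coe_fn_mk, braidDD, braidVD, braidDV, Pi.smul_apply, smul_eq_mul]
  congr 1
  field_simp

theorem untangle₂_act_pairP (hq : q ≠ 0) (f : Fin N × Fin N → Fin N × Fin N → M) :
    untangle₂ q (act (pairP q) f) = P₁ (untangle₂ q f) := by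
  rw [untangle₂_apply, splitLeg_act_pairP hq]
  exact funext fun _ => act_braidDV_act_braidVD hq _

theorem untangle₂_act_pairQ (hq : q ≠ 0) (f : Fin N × Fin N → Fin N × Fin N → M) :
    untangle₂ q (act (pairQ q) f) = Q₃ (untangle₂ q f) := by
  rw [untangle₂_apply, splitLeg_act_pairQ hq]
  exact funext fun _ => act_braidDV_act_braidVD hq _

theorem shift_DV_VD (hq : q ≠ 0) (f : Fin N → Fin N → Fin N → M) : C₂ (D₂ f) = f :=
  funext fun _ => act_braidDV_act_braidVD hq _

theorem shift_VD_DV (hq : q ≠ 0) (f : Fin N → Fin N → Fin N → M) : D₂ (C₂ f) = f :=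
  funext fun _ => act_braidVD_act_braidDV hq _

theorem shift_DV_DV_shift_VV (hq : q ≠ 0) (f : Fin N → Fin N → Fin N → M) :
    C₂ (act (braidDV q) (P₂ f)) = P₁ (C₂ (act (braidDV q) f)) := by
  have braided := (yangBaxter_VD_VD_VV hq).act_eq (C₂ (act (braidDV q) f))
  rw [shift_VD_DV hq, act_braidVD_act_braidDV hq] at braided
  rw [← braided, act_braidDV_act_braidVD hq, shift_DV_VD hq]

theorem DV_shift_DV_DD (hq : q ≠ 0) (f : Fin N → Fin N → Fin N → M) :
    act (braidDV q) (C₂ (act (braidDD q) f)) =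
      shift (act (braidDD q)) (act (braidDV q) (C₂ f)) := by
  have braided := (yangBaxter_DD_VD_VD hq).act_eq (act (braidDV q) (C₂ f))
  rw [act_braidVD_act_braidDV hq, shift_VD_DV hq] at braided
  rw [braided, shift_DV_VD hq, act_braidDV_act_braidVD hq]

theorem untangle₃_act_pairP (hq : q ≠ 0)
    (f : Fin N × Fin N → Fin N × Fin N → Fin N × Fin N → M) :
    untangle₃ q (act (pairP q) f) = P₁ (untangle₃ q f) := by
  have split_third : untangle₂ q (fun a b l l' => act (pairP q) f a b (l, l')) =
      P₁ (untangle₂ q fun a b l l' => f a b (l, l')) :=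
    (congrArg (untangle₂ q) (act_shift_shift (pairP q) (splitLeg (M := M)) f).symm).trans
      (untangle₂_act_pairP hq _)
  let T : (Fin N → Fin N → Fin N → Fin N → M) →ₗ[ℂ] (Fin N → Fin N → Fin N → Fin N → M) :=
    act (braidDV q) ∘ₗ shift (act (braidDV q))
  change shift (shift T) (untangle₂ q fun a b l l' => act (pairP q) f a b (l, l')) = _
  rw [split_third, ← act_shift_shift]
  rfl

theorem untangle₃_act_pairQ (hq : q ≠ 0)
    (f : Fin N × Fin N → Fin N × Fin N → Fin N × Fin N → M) :
    untangle₃ q (act (pairQ q) f) = Q₄ (untangle₃ q f) := by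
  have split_third : untangle₂ q (fun a b l l' => act (pairQ q) f a b (l, l')) =
      Q₃ (untangle₂ q fun a b l l' => f a b (l, l')) :=
    (congrArg (untangle₂ q) (act_shift_shift (pairQ q) (splitLeg (M := M)) f).symm).trans
      (untangle₂_act_pairQ hq _)
  ext1 i
  ext1 j
  rw [untangle₃, split_third]
  exact DV_shift_DV_DD hq _

theorem untangle₃_shift_act_pairP (hq : q ≠ 0)
    (f : Fin N × Fin N → Fin N × Fin N → Fin N × Fin N → M) :
    untangle₃ q (shift (act (pairP q)) f) = P₂ (untangle₃ q f) := by
  have untangle_last : shift (untangle₂ q) (shift (act (pairP q)) f) =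
      shift (act (braidVV q)) (shift (untangle₂ q) f) :=
    funext fun _ => untangle₂_act_pairP hq _
  ext1 i
  rw [untangle₃_apply, untangle_last, shift_apply, untangle₃_apply]
  exact shift_DV_DV_shift_VV hq _

theorem untangle₃_shift_act_pairQ (hq : q ≠ 0)
    (f : Fin N × Fin N → Fin N × Fin N → Fin N × Fin N → M) :
    untangle₃ q (shift (act (pairQ q)) f) = Q₅ (untangle₃ q f) := by
  have untangle_last : shift (untangle₂ q) (shift (act (pairQ q)) f) =
      shift (shift (shift (act (braidDD q)))) (shift (untangle₂ q) f) :=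
    funext fun _ => untangle₂_act_pairQ hq _
  let T : (Fin N → Fin N → Fin N → M) →ₗ[ℂ] (Fin N → Fin N → Fin N → M) := shift (act (braidDD q))
  ext1 i
  rw [untangle₃_apply, untangle_last, shift_apply, untangle₃_apply]
  change C₂ (act (braidDV q) (shift (shift T) (splitLeg (shift (untangle₂ q) f) i))) = _
  have far (g : Fin N → Fin N → Fin N → Fin N → Fin N → M) :
      C₂ (shift (shift T) g) = shift (shift T) (C₂ g) :=
    funext fun j => act_shift_shift (braidDV q) (act (k := ℂ) (M := M) (braidDD q)) (g j)
  rw [act_shift_shift, far]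

theorem contract_kd (f : Fin N × Fin N → M) :
    contract (fun a => kd a.1 a.2) f = pairing ℂ (splitLeg f) := by
  simp [contract_apply, pairing_apply, kd, Fintype.sum_prod_type]

theorem splitLeg_contract_act_pairP (hq : q ≠ 0) (f : Fin N × Fin N → Fin N × Fin N → M) :
    splitLeg (contract (fun a => kd a.1 a.2) (act (pairP q) f)) = U₂ (untangle₂ q f) := by
  rw [← contract_shift, contract_kd, splitLeg_act_pairP hq]
  exact pairing_shift_VD_act_VV hq _

theorem splitLeg_shift_contract (hq : q ≠ 0) (f : Fin N × Fin N → Fin N × Fin N → M) :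
    splitLeg (shift (contract fun a => kd a.1 a.2) f) = U₂ (Q₃ (untangle₂ q f)) :=
  calc splitLeg (shift (contract fun a => kd a.1 a.2) f)
      = U₃ (splitLeg (shift splitLeg f)) := funext fun i => funext fun j => contract_kd _
    _ = U₃ (D₂ (untangle₂ q f)) := by rw [shift_VD_untangle₂ hq]
    _ = U₂ (Q₃ (untangle₂ q f)) := funext fun i => (pairing_shift_DD q _).symm

theorem contract_act_pairP_act_pairQ (hq : q ≠ 0) (f : Fin N × Fin N → Fin N × Fin N → M) :
    contract (fun a => kd a.1 a.2) (act (pairP q) (act (pairQ q) f)) =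
      shift (contract fun a => kd a.1 a.2) f :=
  splitLeg_injective <| by
    rw [splitLeg_contract_act_pairP hq, untangle₂_act_pairQ hq, splitLeg_shift_contract hq]

theorem contract_act_pairP_apply (hq : q ≠ 0) (f : Fin N × Fin N → Fin N × Fin N → M)
    (i j : Fin N) :
    contract (fun a => kd a.1 a.2) (act (pairP q) f) (i, j) =
      (q : ℂ) ^ 2 • ∑ s, pw q (-2 * iv s) • f (i, s) (s, j) := by
  have hq' : (q : ℂ) ≠ 0 := mod_cast hq
  have weight (s : Fin N) : ((q : ℂ) ^ 2)⁻¹ ^ (s : ℕ) = (q : ℂ) ^ 2 * pw q (-2 * iv s) := by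
    rw [pw, iv, inv_pow, ← pow_mul, ← zpow_natCast, ← zpow_natCast, ← zpow_neg, ← zpow_add₀ hq']
    congr 1
    push_cast
    ring
  calc contract (fun a => kd a.1 a.2) (act (pairP q) f) (i, j)
      = pairing ℂ (act (braidDV q) (splitLeg (shift splitLeg f) i)) j :=
        congrFun (congrFun (splitLeg_contract_act_pairP hq f) i) j
    _ = (q : ℂ) ^ 2 • ∑ s, pw q (-2 * iv s) • f (i, s) (s, j) := by
        rw [pairing_act_braidDV hq, pairingVD_apply, Finset.sum_apply, Finset.smul_sum]
        simp only [Pi.smul_apply, smul_smul, weight]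
        rfl

theorem shift_contract_act_pairP_apply (hq : q ≠ 0) (f : Fin N × Fin N → Fin N × Fin N → M)
    (i j : Fin N) :
    shift (contract fun a => kd a.1 a.2) (act (pairP q) f) (i, j) =
      (q : ℂ) • ∑ a, ∑ b, ∑ c, ∑ s, ∑ t, ∑ u, ∑ v,
        (Rlm q t u b c * Rminus q s b i a * Rc q c v a j) • f (s, t) (u, v) := by
  have hq' : (q : ℂ) ≠ 0 := mod_cast hq
  have untangled : shift (contract fun a => kd a.1 a.2) (act (pairP q) f) (i, j) =
      pairing ℂ (shift (act (braidDD q)) (act (braidVV q) (untangle₂ q f) i)) j := by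
    rw [← untangle₂_act_pairP hq]
    exact congrFun (congrFun (splitLeg_shift_contract hq _) i) j
  rw [untangled]
  simp only [untangle₂_apply, splitLeg_apply, shift_apply, pairing_apply, act_apply,
    Finset.sum_apply, Pi.smul_apply, Finset.smul_sum, smul_smul, ← Fintype.sum_prod_type']
  refine Fintype.sum_equiv ⟨fun ⟨a, c, v, ⟨s, b⟩, t, u⟩ => (a, b, c, s, t, u, v),
    fun ⟨a, b, c, s, t, u, v⟩ => (a, c, v, (s, b), t, u),
    fun _ => rfl, fun _ => rfl⟩ _ _ fun _ => ?_
  simp only [Equiv.coe_fn_mk, braidVV, braidDD, braidDV, Pi.smul_apply, smul_eq_mul]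
  congr 1
  field_simp

/-- The projector system of `CP_q^{N-1}`. -/
def projectiveSystem (hq : q ≠ 0) (N : ℕ) : ProjectorSystem ℂ (Fin N × Fin N) where
  P := pairP q
  Q := pairQ q
  ε := fun a => kd a.1 a.2
  t := Units.mk0 ((q : ℂ) ^ 2) (pow_ne_zero 2 (mod_cast hq))
  P_braid f := by
    apply untangle₃_injective hq
    simp only [untangle₃_act_pairP hq, untangle₃_shift_act_pairP hq]
    exact (yangBaxter_VV hq).act_eq _
  Q_braid f := by
    apply untangle₃_injective hq
    simp only [untangle₃_act_pairQ hq, untangle₃_shift_act_pairQ hq]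
    exact funext fun i => funext fun j => funext fun l => (yangBaxter_DD hq).act_eq _
  P_Q f := by
    apply untangle₂_injective hq
    simp only [untangle₂_act_pairP hq, untangle₂_act_pairQ hq]
    exact act_shift_shift _ _ _
  P_shift_Q f := by
    apply untangle₃_injective hq
    simp only [untangle₃_act_pairP hq, untangle₃_shift_act_pairQ hq]
    exact act_shift_shift _ _ _
  shift_P_Q {M} _ _ f := by
    apply untangle₃_injective hq
    simp only [untangle₃_act_pairQ hq, untangle₃_shift_act_pairP hq]
    exact funext fun i => act_shift_shift (braidVV q)
      (act (k := ℂ) (M := Fin N → M) (braidDD q)) (untangle₃ q f i)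
  P_P f := by
    apply untangle₂_injective hq
    simp only [untangle₂_act_pairP hq, map_add, map_smul, act_braidVV_act_braidVV hq,
      Units.val_mk0]
  Q_Q f := by
    apply untangle₂_injective hq
    simp only [untangle₂_act_pairQ hq, map_add, map_smul, Units.val_inv_eq_inv_val, Units.val_mk0]
    exact funext fun i => funext fun j => act_braidDD_act_braidDD hq _
  contract_P_Q := contract_act_pairP_act_pairQ hq

end PairLegs

section QuantumProjectiveSpace

variable {q : ℝ} {N : ℕ}

section Expansions

variable {M : Type*} [AddCommGroup M] [Module ℂ M]

theorem act_pairP_apply (f : Fin N × Fin N → Fin N × Fin N → M) (i j k l : Fin N) :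
    act (pairP q) f (i, j) (k, l) =
      (q : ℂ) • ∑ s, ∑ t, ∑ u, ∑ v, RCPm q s t u v i j k l • f (s, t) (u, v) := by
  simp only [act_apply, pairP, Fintype.sum_prod_type, mul_smul, Finset.smul_sum]

theorem act_pairQ_apply (f : Fin N × Fin N → Fin N × Fin N → M) (i j k l : Fin N) :
    act (pairQ q) f (i, j) (k, l) =
      (q : ℂ)⁻¹ • ∑ s, ∑ t, ∑ u, ∑ v, RCPc q s t u v i j k l • f (s, t) (u, v) := by
  simp only [act_apply, pairQ, Fintype.sum_prod_type, mul_smul, Finset.smul_sum]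

variable {A : Type} [Ring A] [Algebra ℂ A] {M : Type} [AddCommGroup M] [Module ℂ M] [Module A M]
  [IsScalarTower ℂ A M] (hq : q ≠ 0) (x : Fin N × Fin N → A) (e : Fin N × Fin N → M)

local notation "S" => projectiveSystem hq N

theorem projectiveSystem_leftPart_apply (i j : Fin N) :
    (S).leftPart x e (i, j) =
      (q : ℂ) ^ 2 • ∑ s, pw q (-2 * iv s) • (x (i, s) • e (s, j)) :=
  contract_act_pairP_apply hq _ i j

theorem projectiveSystem_rightPart_apply (i j : Fin N) :
    (S).rightPart x e (i, j) = (q : ℂ)⁻¹ • ∑ a, ∑ b, ∑ c, ∑ s, ∑ t, ∑ u, ∑ v,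
      (Rlm q t u b c * Rminus q s b i a * Rc q c v a j) • (x (s, t) • e (u, v)) := by
  have hq' : (q : ℂ) ≠ 0 := mod_cast hq
  have scalar : ((q : ℂ) ^ 2)⁻¹ * q = (q : ℂ)⁻¹ := by field_simp
  rw [ProjectorSystem.rightPart_apply, Pi.smul_apply, ← scalar, mul_smul]
  exact congrArg _ (shift_contract_act_pairP_apply hq _ i j)

theorem projectiveSystem_contract_leftPart :
    contract (S).ε ((S).leftPart x e) =
      (q : ℂ) ^ 2 • ∑ i, ∑ j, pw q (-2 * iv j) • (x (i, j) • e (j, i)) := by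
  refine (contract_kd _).trans ?_
  simp only [pairing_apply, splitLeg_apply, projectiveSystem_leftPart_apply, Finset.smul_sum]

theorem projectiveSystem_leftPartMul_apply (i j k l : Fin N) :
    (S).leftPartMul x e (i, j) (k, l) = pw q 3 • ∑ s, ∑ t, ∑ u, ∑ v, ∑ w,
      (pw q (-2 * iv w) * RCPc q s t u v i j k l) • ((x (s, t) * x (u, w)) • e (w, v)) := by
  have scalar : pw q 3 = (q : ℂ) ^ 2 * ((q : ℂ)⁻¹ * (q : ℂ) ^ 2) := by
    rw [pw]; norm_cast; field_simp
  have term (s t u v : Fin N) :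
      RCPc q s t u v i j k l • (x (s, t) • (S).leftPart x e (u, v)) =
        (q : ℂ) ^ 2 • ∑ w, (pw q (-2 * iv w) * RCPc q s t u v i j k l) •
          ((x (s, t) * x (u, w)) • e (w, v)) := by
    rw [projectiveSystem_leftPart_apply, smul_comm (x _), smul_comm (RCPc q _ _ _ _ _ _ _ _)]
    simp only [Finset.smul_sum, mul_smul, smul_comm (x (s, t)) (pw q _)]
    simp only [smul_comm (RCPc q _ _ _ _ _ _ _ _) (pw q _)]
  rw [ProjectorSystem.leftPartMul_apply, Pi.smul_apply, Pi.smul_apply]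
  refine (congrArg _ (act_pairQ_apply _ i j k l)).trans ?_
  simp only [leftMul_apply, Pi.smul_apply, term, ← Finset.smul_sum]
  rw [scalar, mul_smul, mul_smul]
  rfl

theorem sum_comm_four_seven {ι M : Type*} [Fintype ι] [AddCommMonoid M]
    (f : ι → ι → ι → ι → ι → ι → ι → ι → ι → ι → ι → M) :
    ∑ x', ∑ y, ∑ z, ∑ w, ∑ a, ∑ b, ∑ c, ∑ s, ∑ t, ∑ u, ∑ v, f a b c s t u v w x' y z =
      ∑ a, ∑ b, ∑ c, ∑ s, ∑ t, ∑ u, ∑ v, ∑ w, ∑ x', ∑ y, ∑ z, f a b c s t u v w x' y z := by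
  simp only [← Fintype.sum_prod_type']
  exact Fintype.sum_equiv
    ⟨fun ⟨x', y, z, w, a, b, c, s, t, u, v⟩ => (a, b, c, s, t, u, v, w, x', y, z),
      fun ⟨a, b, c, s, t, u, v, w, x', y, z⟩ => (x', y, z, w, a, b, c, s, t, u, v),
      fun _ => rfl, fun _ => rfl⟩ _ _ fun _ => rfl

theorem projectiveSystem_rightPartMul_apply (i j k l : Fin N) :
    (S).rightPartMul x e (i, j) (k, l) = pw q (-2) • ∑ a, ∑ b, ∑ c, ∑ s, ∑ t, ∑ u, ∑ v, ∑ w,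
      ∑ x', ∑ y, ∑ z, (RCPm q x' y z w i j k l * Rlm q t u b c * Rminus q s b z a * Rc q c v a w) •
        ((x (x', y) * x (s, t)) • e (u, v)) := by
  have hq' : (q : ℂ) ≠ 0 := mod_cast hq
  have scalar : pw q (-2) = ((q : ℂ) ^ 2)⁻¹ := by rw [pw]; norm_cast
  have term (x' y z w : Fin N) :
      RCPm q x' y z w i j k l • (x (x', y) • (S).rightPart x e (z, w)) =
        (q : ℂ)⁻¹ • ∑ a, ∑ b, ∑ c, ∑ s, ∑ t, ∑ u, ∑ v,
          (RCPm q x' y z w i j k l * Rlm q t u b c * Rminus q s b z a * Rc q c v a w) •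
            ((x (x', y) * x (s, t)) • e (u, v)) := by
    rw [projectiveSystem_rightPart_apply, smul_comm (x _), smul_comm (RCPm q _ _ _ _ _ _ _ _)]
    simp only [Finset.smul_sum, smul_comm (x (x', y)) (_ : ℂ), mul_smul]
  rw [ProjectorSystem.rightPartMul_apply, Pi.smul_apply, Pi.smul_apply, scalar]
  refine congrArg _ ((act_pairP_apply _ i j k l).trans ?_)
  simp only [leftMul_apply, Pi.smul_apply, term, ← Finset.smul_sum, smul_inv_smul₀ hq']
  exact sum_comm_four_seven _

theorem isProjector_projectiveSystem_iff {x : Fin N × Fin N → A} : (S).IsProjector x ↔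
    (∀ i j k l, ∑ s, ∑ t, ∑ u, ∑ v, RCPm q s t u v i j k l • (x (s, t) * x (u, v)) =
      (q : ℂ)⁻¹ • (x (i, j) * x (k, l))) ∧
    (∀ i j k l, ∑ s, ∑ t, ∑ u, ∑ v, RCPc q s t u v i j k l • (x (s, t) * x (u, v)) =
      (q : ℂ) • (x (i, j) * x (k, l))) ∧
    ∑ i, x (i, i) = 1 := by
  have hq' : (q : ℂ) ≠ 0 := mod_cast hq
  have trace : contract (S).ε x = ∑ i, x (i, i) := contract_kd x
  constructor
  · intro hx
    refine ⟨fun i j k l => ?_, fun i j k l => ?_, trace ▸ hx.contract_eq_one⟩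
    · rw [eq_inv_smul_iff₀ hq', ← act_pairP_apply fun a b => x a * x b]
      exact congrFun (congrFun hx.P_mul _) _
    · rw [← inv_smul_eq_iff₀ hq', ← act_pairQ_apply fun a b => x a * x b]
      exact congrFun (congrFun hx.Q_mul _) _
  · rintro ⟨relm, relc, relu⟩
    refine ⟨?_, ?_, trace.trans relu⟩
    · ext ⟨i, j⟩ ⟨k, l⟩
      exact (act_pairP_apply _ i j k l).trans (by rw [relm, smul_inv_smul₀ hq'])
    · ext ⟨i, j⟩ ⟨k, l⟩
      exact (act_pairQ_apply _ i j k l).trans (by rw [relc, inv_smul_smul₀ hq'])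

end Expansions

section UniversalProperty

variable (q N) in
/-- The matrix `(x_ij)` of generators of `CP_q^{N-1}`, as a tensor with one leg. -/
def coordinates : Fin N × Fin N → CPq q N := fun a => X q a.1 a.2

theorem isProjector_coordinates (hq : q ≠ 0) :
    (projectiveSystem hq N).IsProjector (coordinates q N) := by
  refine (isProjector_projectiveSystem_iff hq).2 ⟨fun i j k l => ?_, fun i j k l => ?_, ?_⟩
  · simpa only [coordinates, X, map_sum, map_smul, map_mul] using
      RingQuot.mkAlgHom_rel ℂ (CPrel.relm (q := q) i j k l)
  · simpa only [coordinates, X, map_sum, map_smul, map_mul] using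
      RingQuot.mkAlgHom_rel ℂ (CPrel.relc (q := q) i j k l)
  · simpa only [coordinates, X, map_sum, map_one] using
      RingQuot.mkAlgHom_rel ℂ (CPrel.relu (q := q) (N := N))

variable {B : Type} [Ring B] [Algebra ℂ B] {y : Fin N × Fin N → B}

/-- The algebra homomorphism out of `CP_q^{N-1}` that sends the generators to a given projector. -/
def liftProjector (hq : q ≠ 0) (hy : (projectiveSystem hq N).IsProjector y) : CPq q N →ₐ[ℂ] B :=
  RingQuot.liftAlgHom ℂ ⟨FreeAlgebra.lift ℂ y, fun a b h => by
    obtain ⟨relm, relc, relu⟩ := (isProjector_projectiveSystem_iff hq).1 hy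
    cases h with
    | relm i j k l =>
      simpa only [gen, map_sum, map_smul, map_mul, FreeAlgebra.lift_ι_apply] using relm i j k l
    | relc i j k l =>
      simpa only [gen, map_sum, map_smul, map_mul, FreeAlgebra.lift_ι_apply] using relc i j k l
    | relu => simpa only [gen, map_sum, map_one, FreeAlgebra.lift_ι_apply] using relu⟩

theorem liftProjector_coordinates (hq : q ≠ 0) (hy : (projectiveSystem hq N).IsProjector y)
    (a : Fin N × Fin N) : liftProjector hq hy (coordinates q N a) = y a := by
  simp [liftProjector, coordinates, X, gen]

theorem CPq_algHom_ext {f g : CPq q N →ₐ[ℂ] B}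
    (h : ∀ a, f (coordinates q N a) = g (coordinates q N a)) : f = g := by
  apply RingQuot.ringQuot_ext'
  exact FreeAlgebra.hom_ext (funext h)

end UniversalProperty
end QuantumProjectiveSpace

section RestrictedCalculus

variable {q : ℝ} (hq : q ≠ 0) (N : ℕ)

/-- The module of one-forms of the restricted calculus on `CP_q^{N-1}`. -/
abbrev OneForms : Type := (projectiveSystem hq N).Forms (coordinates q N)

/-- The form `d x_ij` in the module of one-forms, as a tensor with one leg. -/
def coordinateForm : Fin N × Fin N → OneForms hq N := (projectiveSystem hq N).form (coordinates q N)

variable {N}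

/-- The right multiplication of one-forms by functions. -/
def rightAction : CPq q N →ₐ[ℂ] (Module.End (CPq q N) (OneForms hq N))ᵐᵒᵖ :=
  liftProjector hq (ProjectorSystem.isProjector_formRightMul (isProjector_coordinates hq))

instance : Module (CPq q N)ᵐᵒᵖ (OneForms hq N) :=
  Module.compHom _ (AlgHom.opComm (rightAction hq)).toRingHom

theorem op_smul_oneForm (a : CPq q N) (ω : OneForms hq N) :
    MulOpposite.op a • ω = (rightAction hq a).unop ω := rfl

instance : SMulCommClass (CPq q N) (CPq q N)ᵐᵒᵖ (OneForms hq N) where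
  smul_comm a b ω := ((rightAction hq b.unop).unop.map_smul a ω).symm

instance : IsScalarTower ℂ (CPq q N)ᵐᵒᵖ (OneForms hq N) where
  smul_assoc c b ω := by
    change (rightAction hq (c • b.unop)).unop ω = c • (rightAction hq b.unop).unop ω
    rw [map_smul]
    rfl

theorem op_coordinates_smul_coordinateForm (a b : Fin N × Fin N) :
    MulOpposite.op (coordinates q N b) • coordinateForm hq N a =
      (projectiveSystem hq N).formMul (coordinates q N) (coordinateForm hq N) a b := by
  rw [op_smul_oneForm, rightAction, liftProjector_coordinates]
  exact congrFun (ProjectorSystem.liftForm_form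
    (ProjectorSystem.isForm_form.formMul (isProjector_coordinates hq)) a) b

/-- The homomorphism `a ↦ a + da` into the trivial extension by the one-forms. -/
def addDifferential : CPq q N →ₐ[ℂ] TrivSqZeroExt (CPq q N) (OneForms hq N) :=
  liftProjector hq (ProjectorSystem.isProjector_inl_add_inr (isProjector_coordinates hq)
    ProjectorSystem.isForm_form (op_coordinates_smul_coordinateForm hq))

theorem addDifferential_coordinates (a : Fin N × Fin N) : addDifferential hq (coordinates q N a) =
    TrivSqZeroExt.inl (coordinates q N a) + TrivSqZeroExt.inr (coordinateForm hq N a) :=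
  liftProjector_coordinates hq _ a

theorem fst_addDifferential (a : CPq q N) : (addDifferential hq a).fst = a := by
  have : (TrivSqZeroExt.fstHom ℂ _ _).comp (addDifferential hq) = AlgHom.id ℂ (CPq q N) :=
    CPq_algHom_ext fun a => by simp [addDifferential_coordinates]
  exact DFunLike.congr_fun this a

/-- The differential of the restricted calculus on `CP_q^{N-1}`. -/
def differential : CPq q N →ₗ[ℂ] OneForms hq N :=
  (TrivSqZeroExt.sndHom (CPq q N) (OneForms hq N)).restrictScalars ℂ ∘ₗ
    (addDifferential hq).toLinearMap

theorem differential_apply (a : CPq q N) : differential hq a = (addDifferential hq a).snd := rfl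

theorem differential_coordinates (a : Fin N × Fin N) :
    differential hq (coordinates q N a) = coordinateForm hq N a := by
  simp [differential_apply, addDifferential_coordinates]

theorem differential_mul (a b : CPq q N) :
    differential hq (a * b) = MulOpposite.op b • differential hq a + a • differential hq b := by
  simp only [differential_apply, map_mul, TrivSqZeroExt.snd_mul, fst_addDifferential, add_comm]

open scoped Pointwise in
theorem span_smul_differential :
    Submodule.span ℂ {ω : OneForms hq N | ∃ a b : CPq q N, ω = a • differential hq b} = ⊤ := by
  have span_form : Submodule.span (CPq q N) (Set.range (differential hq (N := N))) = ⊤ := by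
    have range_le : Set.range (coordinateForm hq N) ⊆ Set.range (differential hq) :=
      Set.range_subset_iff.2 fun a => ⟨_, differential_coordinates hq a⟩
    refine eq_top_mono (Submodule.span_mono range_le) ?_
    rw [← Fintype.range_linearCombination, coordinateForm,
      ProjectorSystem.linearCombination_form, Submodule.range_mkQ]
  have products : {ω : OneForms hq N | ∃ a b : CPq q N, ω = a • differential hq b} =
      (Set.univ : Set (CPq q N)) • Set.range (differential hq) := by
    ext ω
    simp [Set.mem_smul, eq_comm]
  rw [products, Submodule.span_smul_of_span_eq_top Submodule.span_univ, span_form,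
    Submodule.restrictScalars_top]

variable (N) in
/-- The restricted calculus on `CP_q^{N-1}`. -/
def restrictedCalculus : FODC (CPq q N) where
  Γ := OneForms hq N
  d := differential hq
  d_add := map_add _
  d_smul := map_smul _
  leibniz := differential_mul hq
  spanning := span_smul_differential hq

theorem restrictedCalculus_d_X (i j : Fin N) :
    (restrictedCalculus hq N).d (X q i j) = coordinateForm hq N (i, j) :=
  differential_coordinates hq (i, j)

theorem op_smul_restrictedCalculus_d (i j k l : Fin N) :
    MulOpposite.op (X q k l) • (restrictedCalculus hq N).d (X q i j) =
      (projectiveSystem hq N).formMul (coordinates q N)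
        (fun a => (restrictedCalculus hq N).d (X q a.1 a.2)) (i, j) (k, l) := by
  simp only [restrictedCalculus_d_X]
  exact op_coordinates_smul_coordinateForm hq (i, j) (k, l)

theorem piMap_restrictedCalculus : piMap q (restrictedCalculus hq N) =
    ((projectiveSystem hq N).formRelations (coordinates q N)).mkQ := by
  rw [← ProjectorSystem.linearCombination_form]
  ext f
  simp only [piMap, restrictedCalculus_d_X]
  rfl

theorem om_restrictedCalculus : om q (restrictedCalculus hq N) = 0 := by
  have weighted := (projectiveSystem_contract_leftPart hq _ (coordinateForm hq N)).symm.trans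
    ProjectorSystem.isForm_form.contract_leftPart
  rw [smul_eq_zero_iff_right (pow_ne_zero 2 (mod_cast hq))] at weighted
  simp only [om, restrictedCalculus_d_X]
  exact weighted

theorem piMap_restrictedCalculus_eq_zero_iff (f : FMod q N) :
    piMap q (restrictedCalculus hq N) f = 0 ↔
      f ∈ (projectiveSystem hq N).formRelations (coordinates q N) := by
  rw [piMap_restrictedCalculus]
  exact Submodule.Quotient.mk_eq_zero _

theorem formRelations_coordinates :
    (projectiveSystem hq N).formRelations (coordinates q N) = Submodule.span (CPq q N)
      {g | g = omHat q N ∨ ∃ i j, g = rho' q ((q : ℂ) ^ 2) (q : ℂ)⁻¹ i j} := by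
  have hq' : (q : ℂ) ^ 2 ≠ 0 := pow_ne_zero 2 (mod_cast hq)
  let dx : Fin N × Fin N → FMod q N := ProjectorSystem.freeForm
  have rel_om : contract (projectiveSystem hq N).ε
      ((projectiveSystem hq N).leftPart (coordinates q N) dx) = (q : ℂ) ^ 2 • omHat q N :=
    projectiveSystem_contract_leftPart hq _ _
  have rel_rho (a : Fin N × Fin N) : (dx - ((projectiveSystem hq N).leftPart (coordinates q N) dx +
      (projectiveSystem hq N).rightPart (coordinates q N) dx)) a =
        rho' q ((q : ℂ) ^ 2) (q : ℂ)⁻¹ a.1 a.2 := by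
    rw [← sub_sub, Pi.sub_apply, Pi.sub_apply, projectiveSystem_leftPart_apply hq _ _ a.1 a.2,
      projectiveSystem_rightPart_apply hq _ _ a.1 a.2]
    rfl
  apply le_antisymm
  · rw [ProjectorSystem.formRelations, Submodule.span_le, Set.insert_subset_iff,
      Set.range_subset_iff]
    refine ⟨?_, fun a => ?_⟩
    · rw [rel_om]
      exact Submodule.smul_of_tower_mem _ _ (Submodule.subset_span (Or.inl rfl))
    · rw [rel_rho]
      exact Submodule.subset_span (Or.inr ⟨_, _, rfl⟩)
  · rw [Submodule.span_le]
    rintro g (rfl | ⟨i, j, rfl⟩)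
    · rw [← inv_smul_smul₀ hq' (omHat q N), ← rel_om]
      exact Submodule.smul_of_tower_mem _ _ (Submodule.subset_span (Set.mem_insert _ _))
    · rw [← rel_rho (i, j)]
      exact Submodule.subset_span (Set.mem_insert_of_mem _ ⟨_, rfl⟩)

end RestrictedCalculus

/-- existence of the restricted calculus `Γ̃̃` on `CP_q^{N-1}`. -/
theorem statement10 (q : ℝ) (hq0 : q ≠ 0) (hq1 : q ≠ 1) (hq2 : q ≠ -1) (N : ℕ) (hN : 2 ≤ N) :
    ∃ D : FODC (CPq q N),
      Function.Surjective (piMap q D) ∧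
      (∀ f : FMod q N, piMap q D f = 0 ↔
        f ∈ Submodule.span (CPq q N) {g : FMod q N | g = omHat q N ∨ ∃ i j : Fin N, g = rho' q ((q : ℂ) ^ 2) ((q : ℂ)⁻¹) i j}) ∧
      om q D = 0 ∧
      (∀ i j k l : Fin N,
        MulOpposite.op (X q k l) • D.d (X q i j) =
        pw q (-2) • (∑ a : Fin N, ∑ b : Fin N, ∑ c : Fin N, ∑ s : Fin N, ∑ t : Fin N, ∑ u : Fin N, ∑ v : Fin N, ∑ w : Fin N, ∑ x' : Fin N, ∑ y : Fin N, ∑ z : Fin N, (RCPm q x' y z w i j k l * Rlm q t u b c * Rminus q s b z a * Rc q c v a w) • ((X q x' y * X q s t) • D.d (X q u v)))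
        + pw q 3 • (∑ s : Fin N, ∑ t : Fin N, ∑ u : Fin N, ∑ v : Fin N, ∑ w : Fin N, (pw q (-2 * iv w) * RCPc q s t u v i j k l) • ((X q s t * X q u w) • D.d (X q w v)))) := by
  refine ⟨restrictedCalculus hq0 N, ?_, fun f => ?_, om_restrictedCalculus hq0, fun i j k l => ?_⟩
  · rw [piMap_restrictedCalculus]
    exact Submodule.mkQ_surjective _
  · rw [piMap_restrictedCalculus_eq_zero_iff, formRelations_coordinates]
  · rw [op_smul_restrictedCalculus_d, ProjectorSystem.formMul_apply, add_comm, Pi.add_apply,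
      Pi.add_apply, projectiveSystem_rightPartMul_apply, projectiveSystem_leftPartMul_apply]
    rfl
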